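/- arXiv:solv-int/9907001 — 6 statements merged into one kernel-verified Lean document; each statement's English description precedes it below -/
import Mathlib

section
/- Let a, b > 0 be real. For every natural number k, the monic Jacobi polynomials satisfy (1 − x²)·p_k'(x) − (((a+b+2)x + (a−b))/2)·p_k(x) = −((2k + 2 + a + b)/2)·p_{k+1}(x) + [2k(a+b+k)(a+k)(b+k) / ((a+b+2k+1)(a+b+2k)(a+b+2k−1))]·p_{k−1}(x) for all real x (with the convention p_{−1} = 0, the p_{k−1} term being absent for k = 0). That is, the operator n = (1−x²)·(d/dx) − ((a+b+2)x + (a−b))/2 associated to the Jacobi weight (1−x)^a(1+x)^b acts tridiagonally on the monic Jacobi polynomials, and the coefficient of p_{k−1} equals ((2k+a+b)/2)·h_k/h_{k−1}. -/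
open Finset

/-- The Jacobi polynomial `P_n^{(a,b)}`. -/
noncomputable def jacobiP (a b : ℝ) (n : ℕ) (x : ℝ) : ℝ :=
  ∑ s ∈ range (n + 1),
    (Real.Gamma ((n : ℝ) + a + 1) / (Real.Gamma (a + (s : ℝ) + 1) * (Nat.factorial (n - s)))) *
    (Real.Gamma ((n : ℝ) + b + 1) / (Real.Gamma ((n : ℝ) + b - (s : ℝ) + 1) * (Nat.factorial s))) *
    ((x - 1) / 2) ^ s * ((x + 1) / 2) ^ (n - s)

/-- The monic Jacobi polynomials `p_k = 2^k k! Γ(a+b+k+1)/Γ(a+b+2k+1) · P_k^{(a,b)}`. -/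
noncomputable def jacobiMonic (a b : ℝ) (k : ℕ) (x : ℝ) : ℝ :=
  2 ^ k * (Nat.factorial k) * Real.Gamma (a + b + (k : ℝ) + 1) /
    Real.Gamma (a + b + 2 * (k : ℝ) + 1) * jacobiP a b k x

/-- Homogeneous sums with the reciprocal Gamma weights of the Jacobi polynomial. -/
noncomputable def jacS (a b u v : ℝ) (n : ℕ) (f : ℝ → ℝ) : ℝ :=
  ∑ s ∈ range (n + 1),
    (1 / (Real.Gamma (a + (s : ℝ) + 1) * (Nat.factorial (n - s)) *
      (Real.Gamma ((n : ℝ) + b - (s : ℝ) + 1) * (Nat.factorial s)))) * f s * u ^ s * v ^ (n - s)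

/-- The full normalising constant of the monic polynomial. -/
noncomputable def jacC (a b : ℝ) (k : ℕ) : ℝ :=
  2 ^ k * (Nat.factorial k) * Real.Gamma (a + b + (k : ℝ) + 1) /
    Real.Gamma (a + b + 2 * (k : ℝ) + 1) *
      (Real.Gamma ((k : ℝ) + a + 1) * Real.Gamma ((k : ℝ) + b + 1))

lemma jacS_v (a b u v : ℝ) (hb : 0 < b) (n : ℕ) (f : ℝ → ℝ) :
    v * jacS a b u v n f =
      jacS a b u v (n + 1) (fun s => (b + n + 1 - s) * (n + 1 - s) * f s) := by
  unfold jacS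
  rw [sum_range_succ _ (n + 1), mul_sum]
  have h0 : ((n : ℝ) + 1 - ((n + 1 : ℕ) : ℝ)) = 0 := by push_cast; ring
  simp only [h0, mul_zero, zero_mul, add_zero]
  refine sum_congr rfl fun s hs => ?_
  obtain ⟨d, rfl⟩ : ∃ d, n = s + d := ⟨n - s, by have := mem_range.1 hs; omega⟩
  have e1 : s + d + 1 - s = d + 1 := by omega
  have e2 : s + d - s = d := by omega
  have e3 : (((s + d + 1 : ℕ) : ℝ) + b - s + 1) = (d + b + 1) + 1 := by push_cast; ring
  have e4 : (((s + d : ℕ) : ℝ) + b - s + 1) = (d + b + 1) := by push_cast; ring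
  have hp : (0 : ℝ) < d + b + 1 := by positivity
  rw [e1, e2, e3, e4, Real.Gamma_add_one hp.ne', Nat.factorial_succ]
  have hG := (Real.Gamma_pos_of_pos hp).ne'
  have e5 : (b + ((s + d : ℕ) : ℝ) + 1 - s) = d + b + 1 := by push_cast; ring
  have e6 : (((s + d : ℕ) : ℝ) + 1 - s) = d + 1 := by push_cast; ring
  rw [e5, e6]
  have hd : (d : ℝ) + 1 ≠ 0 := by positivity
  have hp' := hp.ne'
  push_cast
  generalize Real.Gamma (a + s + 1) = g1 at *
  generalize Real.Gamma (d + b + 1) = g2 at *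
  rw [pow_succ]
  simp only [one_div, mul_inv]
  field_simp

lemma jacS_u (a b u v : ℝ) (ha : 0 < a) (n : ℕ) (f : ℝ → ℝ) :
    u * jacS a b u v n f =
      jacS a b u v (n + 1) (fun s => (a + s) * s * f (s - 1)) := by
  unfold jacS
  rw [sum_range_succ' _ (n + 1), mul_sum]
  simp only [Nat.cast_zero, mul_zero, zero_mul, add_zero]
  refine sum_congr rfl fun s hs => ?_
  have e1 : n + 1 - (s + 1) = n - s := by omega
  have e3 : (((n + 1 : ℕ) : ℝ) + b - ((s + 1 : ℕ) : ℝ) + 1) = n + b - s + 1 := by push_cast; ring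
  have e4 : (a + ((s + 1 : ℕ) : ℝ) + 1) = (a + s + 1) + 1 := by push_cast; ring
  have e5 : (((s + 1 : ℕ) : ℝ) - 1) = s := by push_cast; ring
  have e6 : (a + ((s + 1 : ℕ) : ℝ)) = a + s + 1 := by push_cast; ring
  have hp : (0 : ℝ) < a + s + 1 := by positivity
  rw [e1, e3, e4, e5, e6, Real.Gamma_add_one hp.ne', Nat.factorial_succ]
  have hs : (s : ℝ) + 1 ≠ 0 := by positivity
  have hp' := hp.ne'
  push_cast
  generalize Real.Gamma (n + b - s + 1) = g1 at *
  generalize Real.Gamma (a + s + 1) = g2 at *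
  rw [pow_succ]
  simp only [one_div, mul_inv]
  field_simp

lemma jacobiMonic_eq (a b : ℝ) (k : ℕ) (x : ℝ) :
    jacobiMonic a b k x = jacC a b k * jacS a b ((x - 1) / 2) ((x + 1) / 2) k (fun _ => 1) := by
  unfold jacobiMonic jacC jacS jacobiP
  rw [mul_assoc (_ / _)]
  congr 1
  rw [mul_sum]
  refine sum_congr rfl fun s _ => ?_
  simp only [div_eq_mul_inv, mul_inv]
  ring

lemma jacS_deriv (a b : ℝ) (k : ℕ) (x : ℝ) :
    (1 - x ^ 2) * deriv (fun x => jacS a b ((x - 1) / 2) ((x + 1) / 2) k (fun _ => 1)) x =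
      -2 * ((x + 1) / 2 * jacS a b ((x - 1) / 2) ((x + 1) / 2) k (fun s => s)
        + (x - 1) / 2 * jacS a b ((x - 1) / 2) ((x + 1) / 2) k (fun s => k - s)) := by
  have hu : HasDerivAt (fun x : ℝ => (x - 1) / 2) (1 / 2) x :=
    ((hasDerivAt_id x).sub_const 1).div_const 2
  have hv : HasDerivAt (fun x : ℝ => (x + 1) / 2) (1 / 2) x :=
    ((hasDerivAt_id x).add_const 1).div_const 2
  unfold jacS
  have key : ∀ s ∈ range (k + 1), HasDerivAt (fun x : ℝ =>
      (1 / (Real.Gamma (a + (s : ℝ) + 1) * (Nat.factorial (k - s)) *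
      (Real.Gamma ((k : ℝ) + b - (s : ℝ) + 1) * (Nat.factorial s)))) * 1 *
        ((x - 1) / 2) ^ s * ((x + 1) / 2) ^ (k - s)) _ x := fun s _ =>
    ((hu.fun_pow s).const_mul _).fun_mul (hv.fun_pow (k - s))
  rw [(HasDerivAt.fun_sum key).deriv, mul_sum, mul_sum, mul_sum, ← sum_add_distrib, mul_sum]
  refine sum_congr rfl fun s hs => ?_
  have hsk : s ≤ k := by have := mem_range.1 hs; omega
  beta_reduce
  rw [← Nat.cast_sub hsk]
  generalize k - s = d
  generalize (1 / (Real.Gamma (a + (s : ℝ) + 1) * (Nat.factorial d) *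
      (Real.Gamma ((k : ℝ) + b - (s : ℝ) + 1) * (Nat.factorial s)))) = g
  have e : 1 - x ^ 2 = -4 * ((x - 1) / 2) * ((x + 1) / 2) := by ring
  rw [e]
  generalize (x - 1) / 2 = u
  generalize (x + 1) / 2 = v
  have h1 : (s : ℝ) * u ^ (s - 1) * u = s * u ^ s := by
    cases s with
    | zero => simp
    | succ s => simp [pow_succ, mul_assoc]
  have h2 : (d : ℝ) * v ^ (d - 1) * v = d * v ^ d := by
    cases d with
    | zero => simp
    | succ s => simp [pow_succ, mul_assoc]
  linear_combination (-2 * g * v * v ^ d) * h1 + (-2 * g * u * u ^ s) * h2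

lemma jacC_succ (a b : ℝ) (ha : 0 < a) (hb : 0 < b) (k : ℕ) :
    jacC a b (k + 1) * ((a + b + 2 * k + 2) * (a + b + 2 * k + 1)) =
      2 * (k + 1) * (a + b + k + 1) * (k + 1 + a) * (k + 1 + b) * jacC a b k := by
  unfold jacC
  have p1 : (0 : ℝ) < a + b + k + 1 := by positivity
  have p2 : (0 : ℝ) < a + b + 2 * k + 1 := by positivity
  have p3 : (0 : ℝ) < a + b + 2 * k + 1 + 1 := by positivity
  have p4 : (0 : ℝ) < k + a + 1 := by positivity
  have p5 : (0 : ℝ) < k + b + 1 := by positivity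
  have e1 : a + b + ((k + 1 : ℕ) : ℝ) + 1 = (a + b + k + 1) + 1 := by push_cast; ring
  have e2 : a + b + 2 * ((k + 1 : ℕ) : ℝ) + 1 = (a + b + 2 * k + 1 + 1) + 1 := by push_cast; ring
  have e3 : ((k + 1 : ℕ) : ℝ) + a + 1 = (k + a + 1) + 1 := by push_cast; ring
  have e4 : ((k + 1 : ℕ) : ℝ) + b + 1 = (k + b + 1) + 1 := by push_cast; ring
  rw [e1, e2, e3, e4, Real.Gamma_add_one p1.ne', Real.Gamma_add_one p3.ne',
    Real.Gamma_add_one p2.ne', Real.Gamma_add_one p4.ne', Real.Gamma_add_one p5.ne',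
    Nat.factorial_succ]
  have hG := (Real.Gamma_pos_of_pos p2).ne'
  generalize Real.Gamma (a + b + 2 * k + 1) = g at *
  have := p2.ne'
  have := p3.ne'
  push_cast
  field_simp
  ring

/-- The coefficientwise identity, without the normalising constants. -/
lemma jacS_main (a b : ℝ) (ha : 0 < a) (hb : 0 < b) (u v : ℝ) (h : v - u = 1) (m : ℕ) :
    (a + b + 2 * m + 3) * (-2 * (v * jacS a b u v (m + 1) (fun s => s)
        + u * jacS a b u v (m + 1) (fun s => ((m + 1 : ℕ) : ℝ) - s))
      - ((b + 1) * u + (a + 1) * v) * jacS a b u v (m + 1) (fun _ => 1)) =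
    -((m + 2) * (a + b + m + 2) * (m + 2 + a) * (m + 2 + b)) *
        jacS a b u v (m + 1 + 1) (fun _ => 1)
      + jacS a b u v m (fun _ => 1) := by
  have e : jacS a b u v m (fun _ => 1) =
      v * (v * jacS a b u v m (fun _ => 1)) - 2 * (u * (v * jacS a b u v m (fun _ => 1)))
        + u * (u * jacS a b u v m (fun _ => 1)) := by
    linear_combination (-(v - u) - 1) * jacS a b u v m (fun _ => 1) * h
  rw [e, add_mul ((b + 1) * u), mul_assoc (b + 1), mul_assoc (a + 1)]
  simp only [jacS_v a b u v hb, jacS_u a b u v ha]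
  simp only [jacS, mul_sum, ← sum_add_distrib, ← sum_sub_distrib]
  refine sum_congr rfl fun s _ => ?_
  push_cast
  ring

/-- The operator `n = (1−x²)·(d/dx) − ((a+b+2)x + (a−b))/2` acts tridiagonally on the
monic Jacobi polynomials. -/
theorem jacobi_nOp_tridiagonal (a b : ℝ) (ha : 0 < a) (hb : 0 < b) (k : ℕ) (x : ℝ) :
    (1 - x ^ 2) * deriv (jacobiMonic a b k) x
        - (((a + b + 2) * x + (a - b)) / 2) * jacobiMonic a b k x
      = -((2 * (k : ℝ) + 2 + a + b) / 2) * jacobiMonic a b (k + 1) x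
        + (2 * (k : ℝ) * (a + b + k) * (a + k) * (b + k) /
            ((a + b + 2 * k + 1) * (a + b + 2 * k) * (a + b + 2 * k - 1)))
          * jacobiMonic a b (k - 1) x := by
  cases k with
  | zero =>
    have hd : jacobiMonic a b 0 = fun _ => jacobiMonic a b 0 0 := by
      funext y; simp [jacobiMonic, jacobiP]
    have hd0 : deriv (jacobiMonic a b 0) x = 0 := by rw [hd]; simp
    have hC := jacC_succ a b ha hb 0
    have h1 : (a + b + 1) * (((a + b + 2) * x + (a - b)) / 2 * jacobiMonic a b 0 x) =
        (a + b + 1) * ((2 + a + b) / 2 * jacobiMonic a b (0 + 1) x) := by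
      rw [jacobiMonic_eq, jacobiMonic_eq]
      have hx : ((a + b + 2) * x + (a - b)) / 2 =
        (b + 1) * ((x - 1) / 2) + (a + 1) * ((x + 1) / 2) := by ring
      have hS : (((a + b + 2) * x + (a - b)) / 2) *
          jacS a b ((x - 1) / 2) ((x + 1) / 2) 0 (fun _ => 1) =
          (a + 1) * (b + 1) * jacS a b ((x - 1) / 2) ((x + 1) / 2) (0 + 1) (fun _ => 1) := by
        rw [hx, add_mul, mul_assoc (b + 1), mul_assoc (a + 1), jacS_v a b _ _ hb,
          jacS_u a b _ _ ha]
        simp only [jacS, mul_sum, ← sum_add_distrib]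
        refine sum_congr rfl fun s hs => ?_
        have : s = 0 ∨ s = 1 := by have := mem_range.1 hs; omega
        rcases this with rfl | rfl <;> push_cast <;> ring
      push_cast at hC
      linear_combination (a + b + 1) * jacC a b 0 * hS -
        jacS a b ((x - 1) / 2) ((x + 1) / 2) (0 + 1) (fun _ => 1) / 2 * hC
    have h2 := mul_left_cancel₀ (by positivity) h1
    rw [hd0]
    push_cast
    simp only [mul_zero, zero_mul, zero_div, add_zero, zero_add] at h2 ⊢
    linear_combination -h2
  | succ m =>
    have hd : jacobiMonic a b (m + 1) = fun x => jacC a b (m + 1) *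
        jacS a b ((x - 1) / 2) ((x + 1) / 2) (m + 1) (fun _ => 1) := by
      funext y; exact jacobiMonic_eq a b (m + 1) y
    have hD := jacS_deriv a b (m + 1) x
    have hM := jacS_main a b ha hb ((x - 1) / 2) ((x + 1) / 2) (by ring) m
    have hC1 := jacC_succ a b ha hb m
    have hC2 := jacC_succ a b ha hb (m + 1)
    have hdd : deriv (jacobiMonic a b (m + 1)) x = jacC a b (m + 1) *
        deriv (fun x => jacS a b ((x - 1) / 2) ((x + 1) / 2) (m + 1) (fun _ => 1)) x := by
      rw [hd, deriv_const_mul_field]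
    rw [hdd, Nat.add_sub_cancel, jacobiMonic_eq, jacobiMonic_eq, jacobiMonic_eq]
    rw [← hD] at hM
    clear hD hdd hd
    generalize deriv (fun x => jacS a b ((x - 1) / 2) ((x + 1) / 2) (m + 1) (fun _ => 1)) x = D
      at *
    generalize jacS a b ((x - 1) / 2) ((x + 1) / 2) (m + 1) (fun _ => 1) = S1 at *
    generalize jacS a b ((x - 1) / 2) ((x + 1) / 2) (m + 1 + 1) (fun _ => 1) = S2 at *
    generalize jacS a b ((x - 1) / 2) ((x + 1) / 2) m (fun _ => 1) = S0 at *
    generalize jacC a b (m + 1) = C1 at *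
    generalize jacC a b (m + 1 + 1) = C2 at *
    generalize jacC a b m = C0 at *
    push_cast at *
    have q1 : a + b + 2 * ((m : ℝ) + 1) + 1 ≠ 0 := by positivity
    have q2 : a + b + 2 * ((m : ℝ) + 1) ≠ 0 := by positivity
    have q3 : a + b + 2 * ((m : ℝ) + 1) - 1 ≠ 0 := by
      have : (0 : ℝ) < a + b + 2 * ((m : ℝ) + 1) - 1 := by
        have : (0 : ℝ) ≤ m := by positivity
        linarith
      exact this.ne'
    have hB : 2 * ((m : ℝ) + 1) * (a + b + (m + 1)) * (a + (m + 1)) * (b + (m + 1)) /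
        ((a + b + 2 * (m + 1) + 1) * (a + b + 2 * (m + 1)) * (a + b + 2 * (m + 1) - 1)) * C0 =
        C1 / (a + b + 2 * (m + 1) + 1) := by
      rw [div_mul_eq_mul_div, div_eq_div_iff (by positivity) q1]
      linear_combination -(a + b + 2 * ((m : ℝ) + 1) + 1) * hC1
    rw [← mul_assoc (_ / _) C0 S0, hB]
    apply mul_left_cancel₀ q1
    have hq : (a + b + 2 * ((m : ℝ) + 1) + 1) * (C1 / (a + b + 2 * (m + 1) + 1)) = C1 := by
      field_simp
    linear_combination C1 * hM - S0 * hq + S2 / 2 * hC2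
end

section
/- Define q_{2m+1}(x) = p_{2m+1}(x) and q_{2m}(x) = m! Σ_{n=0}^{m} p_{2n}(x)/n!, where p_k are the monic Hermite polynomials. Then the family {q_j} is skew orthogonal with respect to the β = 4 skew inner product with weight e^{−x²} on ℝ: for all natural numbers m, n one has ⟨q_{2m}, q_{2n}⟩₄ = 0, ⟨q_{2m+1}, q_{2n+1}⟩₄ = 0, and ⟨q_{2m}, q_{2n+1}⟩₄ = 0 if m ≠ n, while ⟨q_{2m}, q_{2m+1}⟩₄ = 2^{−2m−1} √π (2m+1)!. -/
open MeasureTheory Finset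

/-- The physicists' Hermite polynomials. -/
noncomputable def hermiteH : ℕ → ℝ → ℝ
  | 0, _ => 1
  | 1, x => 2 * x
  | (n + 2), x => 2 * x * hermiteH (n + 1) x - 2 * (n + 1) * hermiteH n x

/-- The monic Hermite polynomials `p_k = 2^{−k} H_k`. -/
noncomputable def hermiteP (k : ℕ) (x : ℝ) : ℝ := hermiteH k x / 2 ^ k

/-- The skew orthogonal candidates: `q_{2m+1} = p_{2m+1}`,
`q_{2m} = m! Σ_{n=0}^m p_{2n}/n!`. -/
noncomputable def qGSE (j : ℕ) (x : ℝ) : ℝ :=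
  if j % 2 = 1 then hermiteP j x
  else (Nat.factorial (j / 2)) *
    ∑ n ∈ range (j / 2 + 1), hermiteP (2 * n) x / (Nat.factorial n)

/-- The β = 4 skew inner product with weight `e^{−x²}` on ℝ. -/
noncomputable def sip4 (f g : ℝ → ℝ) : ℝ :=
  (1 / 2) * ∫ x : ℝ, Real.exp (-x ^ 2) * (f x * deriv g x - deriv f x * g x)

open Polynomial in
/-- Monic Hermite polynomials as formal polynomials. -/
noncomputable def PP : ℕ → ℝ[X]
  | 0 => 1
  | 1 => X
  | (n + 2) => X * PP (n + 1) - C (((n : ℝ) + 1) / 2) * PP n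

open Polynomial in
lemma PP_deriv (n : ℕ) : derivative (PP (n + 1)) = C ((n : ℝ) + 1) * PP n := by
  induction n using Nat.strong_induction_on with
  | _ n ih =>
    match n with
    | 0 => simp [PP]
    | 1 => simp [PP]; ring_nf
    | (k + 2) =>
      have h1 := ih k (by omega)
      have h2 := ih (k + 1) (by omega)
      have e : PP (k + 2 + 1) = X * PP (k + 2) - C (((k + 1 : ℕ) + 1 : ℝ) / 2) * PP (k + 1) := rfl
      have e2 : PP (k + 2) = X * PP (k + 1) - C (((k : ℝ) + 1) / 2) * PP k := rfl
      rw [e]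
      simp only [derivative_sub, derivative_mul, derivative_X, derivative_C, zero_mul, zero_add,
        one_mul]
      rw [h1, show k + 2 = k + 1 + 1 from rfl, h2, show k + 1 + 1 = k + 2 from rfl, e2]
      apply Polynomial.funext
      intro x
      simp
      ring

open Polynomial in
lemma PP_succ (n : ℕ) : PP (n + 1) = X * PP n - C (1 / 2 : ℝ) * derivative (PP n) := by
  match n with
  | 0 => simp [PP]
  | (k + 1) =>
    rw [PP_deriv, ← mul_assoc, ← C_mul]
    show X * PP (k + 1) - C (((k : ℝ) + 1) / 2) * PP k = _
    congr 3
    ring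

lemma hermiteP_eq (n : ℕ) (x : ℝ) : hermiteP n x = (PP n).eval x := by
  induction n using Nat.strong_induction_on with
  | _ n ih =>
    match n with
    | 0 => simp [PP, hermiteP, hermiteH]
    | 1 => simp [PP, hermiteP, hermiteH]
    | (k + 2) =>
      have h1 := ih k (by omega)
      have h2 := ih (k + 1) (by omega)
      simp only [PP, Polynomial.eval_sub, Polynomial.eval_mul, Polynomial.eval_X,
        Polynomial.eval_C]
      rw [← h1, ← h2]
      simp only [hermiteP, hermiteH]
      field_simp
      ring

open Polynomial in
lemma integ (p : ℝ[X]) : Integrable (fun x : ℝ => Real.exp (-x ^ 2) * p.eval x) := by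
  induction p using Polynomial.induction_on' with
  | add p q hp hq =>
    have := hp.add hq
    refine this.congr (Filter.Eventually.of_forall fun x => ?_)
    simp [mul_add]
  | monomial n a =>
    have h := integrable_rpow_mul_exp_neg_mul_sq (b := 1) one_pos (s := n)
      (by have : (0 : ℝ) ≤ n := n.cast_nonneg
          linarith)
    refine (h.const_mul a).congr (Filter.Eventually.of_forall fun x => ?_)
    simp
    ring

open Polynomial in
/-- The Gaussian integration functional. -/
noncomputable def LL : ℝ[X] →ₗ[ℝ] ℝ where
  toFun p := ∫ x : ℝ, Real.exp (-x ^ 2) * p.eval x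
  map_add' p q := by
    rw [← integral_add (integ p) (integ q)]
    simp [mul_add]
  map_smul' a p := by
    simp only [RingHom.id_apply, smul_eq_mul]
    rw [← integral_const_mul]
    congr 1
    ext x
    simp
    ring

open Polynomial in
lemma LL_parts (p : ℝ[X]) : LL (derivative p) = 2 * LL (X * p) := by
  have h : ∫ x : ℝ, Real.exp (-x ^ 2) * (derivative p - C 2 * (X * p)).eval x = 0 := by
    apply integral_eq_zero_of_hasDerivAt_of_integrable
      (f := fun x : ℝ => Real.exp (-x ^ 2) * p.eval x) _ (integ _) (integ _)
    intro x
    have h1 : HasDerivAt (fun x : ℝ => Real.exp (-x ^ 2)) (Real.exp (-x ^ 2) * (-(2 * x))) x := by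
      have := ((hasDerivAt_pow 2 x).neg).exp
      simpa using this
    have h2 := h1.mul (p.hasDerivAt x)
    have e : Real.exp (-x ^ 2) * (derivative p - C 2 * (X * p)).eval x =
        Real.exp (-x ^ 2) * (-(2 * x)) * p.eval x + Real.exp (-x ^ 2) * (derivative p).eval x := by
      rw [eval_sub, eval_mul, eval_mul, eval_C, eval_X]
      ring
    rw [e]
    exact h2
  have h' : LL (derivative p - C 2 * (X * p)) = 0 := h
  rw [map_sub, ← smul_eq_C_mul, map_smul, smul_eq_mul] at h'
  linarith

open Polynomial in
lemma LL_C (a : ℝ) (p : ℝ[X]) : LL (C a * p) = a * LL p := by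
  rw [← smul_eq_C_mul, map_smul, smul_eq_mul]

open Polynomial in
lemma LL_step (n : ℕ) (q : ℝ[X]) : LL (PP (n + 1) * q) = 1 / 2 * LL (PP n * derivative q) := by
  have h := LL_parts (PP n * q)
  rw [derivative_mul, map_add] at h
  rw [PP_succ, sub_mul, map_sub, mul_assoc, mul_assoc, LL_C]
  linarith

lemma LL_orth (n : ℕ) : ∀ k : ℕ, LL (PP n * PP k) =
    if n = k then Real.sqrt Real.pi * (Nat.factorial n) / 2 ^ n else 0 := by
  induction n with
  | zero =>
    intro k
    match k with
    | 0 =>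
      have := integral_gaussian 1
      simpa [PP, LL] using this
    | (k + 1) =>
      rw [mul_comm, LL_step]
      simp [PP]
  | succ n ih =>
    intro k
    match k with
    | 0 =>
      rw [LL_step]
      simp [PP]
    | (k + 1) =>
      rw [LL_step, PP_deriv, mul_left_comm, LL_C, ih]
      by_cases h : n = k
      · subst h
        simp [Nat.factorial_succ]
        field_simp
        ring
      · simp [h]

open Polynomial in
/-- Even skew-orthogonal polynomials. -/
noncomputable def QQ (m : ℕ) : ℝ[X] :=
  C (Nat.factorial m : ℝ) * ∑ n ∈ range (m + 1), C ((Nat.factorial n : ℝ)⁻¹) * PP (2 * n)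

lemma q_even (m : ℕ) : qGSE (2 * m) = fun x => (QQ m).eval x := by
  funext x
  simp [qGSE, QQ, Polynomial.eval_finsetSum, hermiteP_eq, div_eq_inv_mul]

lemma q_odd (m : ℕ) : qGSE (2 * m + 1) = fun x => (PP (2 * m + 1)).eval x := by
  funext x
  simp [qGSE, hermiteP_eq, Nat.add_mod]

open Polynomial in
lemma sip_eq (p q : ℝ[X]) : sip4 (fun x => p.eval x) (fun x => q.eval x) =
    1 / 2 * LL (p * derivative q - derivative p * q) := by
  simp [sip4, LL]

open Polynomial in
lemma sip_eq' (p q : ℝ[X]) : sip4 (fun x => p.eval x) (fun x => q.eval x) =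
    LL ((X * p - derivative p) * q) := by
  have h := LL_parts (p * q)
  rw [derivative_mul, map_add] at h
  rw [sip_eq, map_sub, sub_mul, map_sub, mul_assoc]
  linarith

open Polynomial in
lemma tele (m : ℕ) : X * QQ m - derivative (QQ m) = PP (2 * m + 1) := by
  induction m with
  | zero => simp [QQ, PP]
  | succ m ih =>
    have e : QQ (m + 1) = C ((m : ℝ) + 1) * QQ m + PP (2 * m + 2) := by
      unfold QQ
      rw [sum_range_succ _ (m + 1), mul_add, ← mul_assoc (C _) (C _) (PP _), ← C_mul,
        mul_inv_cancel₀ (by positivity), ← mul_assoc, ← C_mul, Nat.factorial_succ]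
      simp [mul_add]
    have d : derivative (PP (2 * m + 2)) = C (((2 * m + 1 : ℕ) : ℝ) + 1) * PP (2 * m + 1) :=
      PP_deriv _
    have r : PP (2 * (m + 1) + 1) =
      X * PP (2 * m + 2) - C ((((2 * m + 1 : ℕ) : ℝ) + 1) / 2) * PP (2 * m + 1) := rfl
    rw [e, r, derivative_add, derivative_mul, d]
    have ih' : X * QQ m = PP (2 * m + 1) + derivative (QQ m) := by rw [← ih]; ring
    apply Polynomial.funext
    intro x
    have := congrArg (eval x) ih'
    simp at this ⊢
    linear_combination ((m : ℝ) + 1) * this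

/-- The family `{q_j}` is skew orthogonal for the β = 4 Hermite skew inner product,
with normalizations `r_m = 2^{−2m−1} √π (2m+1)!`. -/
theorem hermite_skew_orthogonal_beta4 (m n : ℕ) :
    sip4 (qGSE (2 * m)) (qGSE (2 * n)) = 0 ∧
    sip4 (qGSE (2 * m + 1)) (qGSE (2 * n + 1)) = 0 ∧
    (m ≠ n → sip4 (qGSE (2 * m)) (qGSE (2 * n + 1)) = 0) ∧
    sip4 (qGSE (2 * m)) (qGSE (2 * m + 1))
      = Real.sqrt Real.pi * (Nat.factorial (2 * m + 1)) / 2 ^ (2 * m + 1) := by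
  rw [q_even, q_even, q_odd, q_odd]
  refine ⟨?_, ?_, ?_, ?_⟩
  · rw [sip_eq', tele, QQ, mul_left_comm, LL_C, mul_sum, map_sum]
    simp only [mul_left_comm _ (Polynomial.C _) _, LL_C, LL_orth]
    rw [sum_eq_zero, mul_zero]
    intro k _
    rw [if_neg (by omega), mul_zero]
  · rw [sip_eq, PP_deriv, PP_deriv, map_sub, mul_left_comm, mul_assoc, LL_C, LL_C, LL_orth,
      LL_orth, if_neg (by omega), if_neg (by omega)]
    simp
  · intro h
    rw [sip_eq', tele, LL_orth, if_neg (by omega)]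
  · rw [sip_eq', tele, LL_orth, if_pos rfl]
end

section
/- Let a > −1 be real. Define q̃_{2m+1}(x) = p_{2m+1}(x) and q̃_{2m}(x) = 2^{2m} m! Γ(a/2 + m + 1) Σ_{j=0}^{m} p_{2j}(x) / (2^{2j} j! Γ(a/2 + j + 1)), where p_k are the monic Laguerre polynomials with parameter a. Then the family {q̃_j} is skew orthogonal with respect to the β = 4 skew inner product with weight x^{a+1} e^{−x} on (0, ∞): for all natural numbers m, n one has ⟨q̃_{2m}, q̃_{2n}⟩₄ = 0, ⟨q̃_{2m+1}, q̃_{2n+1}⟩₄ = 0, and ⟨q̃_{2m}, q̃_{2n+1}⟩₄ = 0 if m ≠ n, while ⟨q̃_{2m}, q̃_{2m+1}⟩₄ = (1/2)·Γ(2m + 2)·Γ(a + 2m + 2). -/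
open MeasureTheory Finset

/-- The generalized Laguerre polynomial `L_n^a`. -/
noncomputable def laguerreL (a : ℝ) (n : ℕ) (x : ℝ) : ℝ :=
  ∑ k ∈ range (n + 1),
    (-1) ^ k * (Real.Gamma ((n : ℝ) + a + 1) /
      (Real.Gamma ((k : ℝ) + a + 1) * (Nat.factorial k) * (Nat.factorial (n - k)))) * x ^ k

/-- The monic Laguerre polynomials `p_k = (−1)^k k! L_k^a`. -/
noncomputable def laguerreP (a : ℝ) (k : ℕ) (x : ℝ) : ℝ :=
  (-1) ^ k * (Nat.factorial k) * laguerreL a k x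

/-- The skew orthogonal candidates: `q̃_{2m+1} = p_{2m+1}`,
`q̃_{2m} = 2^{2m} m! Γ(a/2+m+1) Σ_{j=0}^m p_{2j}/(2^{2j} j! Γ(a/2+j+1))`. -/
noncomputable def qLSE (a : ℝ) (j : ℕ) (x : ℝ) : ℝ :=
  if j % 2 = 1 then laguerreP a j x
  else 2 ^ j * (Nat.factorial (j / 2)) * Real.Gamma (a / 2 + (j / 2 : ℕ) + 1) *
    ∑ i ∈ range (j / 2 + 1),
      laguerreP a (2 * i) x /
        (2 ^ (2 * i) * (Nat.factorial i) * Real.Gamma (a / 2 + (i : ℝ) + 1))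

/-- The β = 4 skew inner product with weight `x^{a+1} e^{−x}` on `(0, ∞)`. -/
noncomputable def sip4L (a : ℝ) (f g : ℝ → ℝ) : ℝ :=
  (1 / 2) * ∫ x in Set.Ioi (0 : ℝ),
    x ^ (a + 1) * Real.exp (-x) * (f x * deriv g x - deriv f x * g x)

open Polynomial in
/-- Moment functional of `x^a e^{-x}`. -/
noncomputable def momL (a : ℝ) : ℝ[X] →ₗ[ℝ] ℝ :=
  Polynomial.lsum (fun k => (Real.Gamma (a + 1 + k)) • LinearMap.id)

open Polynomial in
lemma momL_monomial (a : ℝ) (k : ℕ) (c : ℝ) :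
    momL a (monomial k c) = Real.Gamma (a + 1 + k) * c := by
  simp [momL, Polynomial.lsum_apply, Polynomial.sum_monomial_index]

open Polynomial in
lemma integral_momL (a : ℝ) (ha : -1 < a) (R : ℝ[X]) :
    IntegrableOn (fun x : ℝ => x ^ (a + 1) * Real.exp (-x) * R.eval x) (Set.Ioi 0) ∧
    ∫ x in Set.Ioi (0 : ℝ), x ^ (a + 1) * Real.exp (-x) * R.eval x = momL a (X * R) := by
  induction R using Polynomial.induction_on' with
  | add p q hp hq =>
    simp only [eval_add, mul_add, map_add]
    exact ⟨hp.1.add hq.1, by rw [integral_add hp.1 hq.1, hp.2, hq.2]⟩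
  | monomial k c =>
    have hs : 0 < a + 2 + k := by
      have : (0:ℝ) ≤ k := Nat.cast_nonneg k
      linarith
    have e : ∀ x ∈ Set.Ioi (0:ℝ), Real.exp (-x) * x ^ (a + 2 + k - 1) * c =
        x ^ (a + 1) * Real.exp (-x) * (monomial k c).eval x := by
      intro x hx
      have hx' : (0:ℝ) < x := hx
      rw [eval_monomial, show a + 2 + (k:ℝ) - 1 = (a + 1) + k by ring, Real.rpow_add hx',
        Real.rpow_natCast]
      ring
    have hi := (Real.GammaIntegral_convergent hs).mul_const c
    refine ⟨IntegrableOn.congr_fun hi e measurableSet_Ioi, ?_⟩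
    rw [← setIntegral_congr_fun measurableSet_Ioi e, integral_mul_const,
      ← Real.Gamma_eq_integral hs, X_mul_monomial, momL_monomial]
    push_cast
    congr 2
    ring

open Polynomial in
lemma momL_ibp (a : ℝ) (ha : -1 < a) (R : ℝ[X]) :
    momL a (X * derivative R + C (a + 1) * R - X * R) = 0 := by
  induction R using Polynomial.induction_on' with
  | add p q hp hq =>
    have : X * derivative (p + q) + C (a + 1) * (p + q) - X * (p + q) =
      (X * derivative p + C (a + 1) * p - X * p) +
      (X * derivative q + C (a + 1) * q - X * q) := by
      rw [derivative_add]; ring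
    rw [this, map_add, hp, hq, add_zero]
  | monomial k c =>
    have hk : (0:ℝ) ≤ k := Nat.cast_nonneg k
    have hG := Real.Gamma_add_one (s := a + 1 + k) (by linarith)
    have h1 : X * derivative (monomial k c) = monomial k (c * k) := by
      rw [derivative_monomial]
      rcases k with _ | k
      · simp
      · rw [X_mul_monomial]; simp
    rw [h1, X_mul_monomial, C_mul_monomial, map_sub, map_add, momL_monomial, momL_monomial,
      momL_monomial]
    push_cast
    rw [← add_assoc, hG]
    ring

open Polynomial in
/-- Monic Laguerre polynomials as polynomials. -/
noncomputable def polP (a : ℝ) (n : ℕ) : ℝ[X] :=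
  ∑ k ∈ range (n + 1), monomial k
    ((-1) ^ (n + k) * (n.choose k) * (Real.Gamma (n + a + 1) / Real.Gamma (k + a + 1)))

open Polynomial in
lemma polP_coeff (a : ℝ) (n k : ℕ) : (polP a n).coeff k =
    (-1) ^ (n + k) * (n.choose k) * (Real.Gamma (n + a + 1) / Real.Gamma (k + a + 1)) := by
  simp only [polP, finsetSum_coeff, coeff_monomial]
  rw [Finset.sum_ite_eq']
  split_ifs with h
  · rfl
  · rw [Nat.choose_eq_zero_of_lt (by simpa [Nat.lt_succ_iff] using h)]; simp

lemma polP_eval (a : ℝ) (n : ℕ) (x : ℝ) : (polP a n).eval x = laguerreP a n x := by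
  simp only [polP, laguerreP, laguerreL, Polynomial.eval_finsetSum, Polynomial.eval_monomial,
    Finset.mul_sum]
  refine Finset.sum_congr rfl fun k hk => ?_
  have hk' : k ≤ n := by simpa [Nat.lt_succ_iff] using hk
  rw [Nat.cast_choose ℝ hk', pow_add]
  have := Nat.factorial_ne_zero k
  have := Nat.factorial_ne_zero (n - k)
  rw [← div_div, ← div_div]
  field_simp

lemma Gpos (a : ℝ) (ha : -1 < a) (n : ℕ) : 0 < Real.Gamma (n + a + 1) := by
  have hk : (0:ℝ) ≤ n := Nat.cast_nonneg n
  exact Real.Gamma_pos_of_pos (by linarith)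

lemma Gsucc (a : ℝ) (ha : -1 < a) (n : ℕ) :
    Real.Gamma ((n + 1 : ℕ) + a + 1) = (n + a + 1) * Real.Gamma (n + a + 1) := by
  have hk : (0:ℝ) ≤ n := Nat.cast_nonneg n
  rw [← Real.Gamma_add_one (by linarith)]
  congr 1; push_cast; ring

lemma choose_real (n k : ℕ) :
    ((k : ℝ) + 1) * (n.choose (k + 1)) = (n - k) * (n.choose k) := by
  rcases le_or_gt k n with h | h
  · have := Nat.choose_succ_right_eq n k
    have h2 : ((n.choose (k+1) * (k+1) : ℕ) : ℝ) = ((n.choose k * (n - k) : ℕ) : ℝ) := by rw [this]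
    push_cast [Nat.cast_sub h] at h2
    linarith
  · rw [Nat.choose_eq_zero_of_lt h, Nat.choose_eq_zero_of_lt (by omega)]; simp

lemma choose_real' (n k : ℕ) :
    ((n : ℝ) + 1 - k) * ((n + 1).choose k) = (n + 1) * (n.choose k) := by
  rcases k with _ | k
  · simp
  · have h1 := choose_real n k
    have : ((n+1).choose (k+1) : ℝ) = n.choose k + n.choose (k+1) := by
      rw [Nat.choose_succ_succ]; push_cast; ring
    rw [this]; push_cast; linarith

open Polynomial in
lemma polP_deriv (a : ℝ) (ha : -1 < a) (n : ℕ) : X * derivative (polP a (n + 1)) =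
    C ((n : ℝ) + 1) * polP a (n + 1) + C (((n : ℝ) + 1) * (n + 1 + a)) * polP a n := by
  ext k
  have h1 : (X * derivative (polP a (n + 1))).coeff k = k * (polP a (n + 1)).coeff k := by
    rcases k with _ | k
    · simp
    · rw [coeff_X_mul, coeff_derivative]; push_cast; ring
  rw [h1, coeff_add, coeff_C_mul, coeff_C_mul, polP_coeff, polP_coeff, Gsucc a ha]
  have h2 := choose_real' n k
  have e : (-1 : ℝ) ^ (n + 1 + k) = - (-1) ^ (n + k) := by ring
  rw [e]
  linear_combination (-1 : ℝ) ^ (n + k) * ((n + a + 1) * Real.Gamma (n + a + 1) /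
    Real.Gamma (k + a + 1)) * h2

open Polynomial in
lemma polP_zero (a : ℝ) (ha : -1 < a) : polP a 0 = 1 := by
  have := Gpos a ha 0
  simp only [Nat.cast_zero, zero_add] at this
  simp [polP, div_self this.ne']

open Polynomial in
lemma polP_one (a : ℝ) (ha : -1 < a) : polP a 1 = X - C (a + 1) := by
  have := Gpos a ha 0
  have h0 := Gsucc a ha 0
  have h1 := Gpos a ha 1
  simp only [Nat.cast_zero, Nat.cast_one, zero_add] at this h0 h1
  ext k
  rw [polP_coeff]
  rcases k with _ | _ | k
  · have e : (X - C (a + 1) : ℝ[X]).coeff 0 = -(a + 1) := by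
      rw [coeff_sub, coeff_X_zero, coeff_C_zero]; ring
    rw [e]
    simp [h0]
    field_simp
    ring
  · simp [div_self h1.ne']
    rw [← C_1, coeff_C]; simp
  · rw [Nat.choose_eq_zero_of_lt (by omega)]
    rw [coeff_sub, coeff_X, coeff_C]; simp

open Polynomial in
lemma polP_rec (a : ℝ) (ha : -1 < a) (n : ℕ) : X * polP a (n + 1) =
    polP a (n + 2) + C (2 * (n : ℝ) + a + 3) * polP a (n + 1) +
      C (((n : ℝ) + 1) * (n + 1 + a)) * polP a n := by
  ext k
  have g1 := Gsucc a ha n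
  have g2 := Gsucc a ha (n + 1)
  rw [g1] at g2
  rcases k with _ | k
  · have g0 := Gpos a ha 0
    simp only [coeff_add, coeff_C_mul, polP_coeff, coeff_X_mul_zero, zero_mul]
    rw [g2, g1]
    simp only [Nat.choose_zero_right]
    push_cast
    ring
  · simp only [coeff_add, coeff_C_mul, polP_coeff, coeff_X_mul]
    rw [g2, g1, Gsucc a ha k]
    have hk : (0:ℝ) ≤ k := Nat.cast_nonneg k
    have gk := Gpos a ha k
    have p1 : ((n+2).choose (k+1) : ℝ) = (n+1).choose k + (n+1).choose (k+1) := by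
      rw [Nat.choose_succ_succ]; push_cast; ring
    have h1 := choose_real (n+1) k
    have h2 := choose_real' n (k+1)
    rw [p1]
    have e1 : (-1 : ℝ) ^ (n + 1 + k) = - (-1) ^ (n + k) := by ring
    have e2 : (-1 : ℝ) ^ (n + 2 + (k + 1)) = - (-1) ^ (n + k) := by ring
    have e3 : (-1 : ℝ) ^ (n + 1 + (k + 1)) = (-1) ^ (n + k) := by ring
    have e4 : (-1 : ℝ) ^ (n + (k + 1)) = - (-1) ^ (n + k) := by ring
    rw [e1, e2, e3, e4]
    push_cast at h1 h2 ⊢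
    have hne : (k:ℝ) + a + 1 ≠ 0 := by linarith
    field_simp
    linear_combination -(n + a + 1) * Real.Gamma (n + a + 1) * (h1 + h2)

lemma momL_polP (a : ℝ) (ha : -1 < a) (n : ℕ) : momL a (polP a (n + 1)) = 0 := by
  induction n with
  | zero =>
    have := momL_ibp a ha 1
    rw [polP_one a ha]
    simp only [Polynomial.derivative_one, mul_zero, mul_one, zero_add] at this
    rw [← neg_eq_zero, ← map_neg, neg_sub]; exact this
  | succ n ih =>
    have := momL_ibp a ha (polP a (n + 1))
    rw [polP_deriv a ha, polP_rec a ha] at this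
    have e : Polynomial.C ((n : ℝ) + 1) * polP a (n + 1) +
        Polynomial.C (((n : ℝ) + 1) * (n + 1 + a)) * polP a n +
        Polynomial.C (a + 1) * polP a (n + 1) - (polP a (n + 2) +
        Polynomial.C (2 * (n : ℝ) + a + 3) * polP a (n + 1) +
        Polynomial.C (((n : ℝ) + 1) * (n + 1 + a)) * polP a n) =
        - polP a (n + 2) + (-(n + 1 : ℝ)) • polP a (n + 1) := by
      rw [Polynomial.smul_eq_C_mul]
      simp only [map_add, map_mul, map_neg, map_one, map_natCast, map_ofNat]
      ring
    rw [e, map_add, map_neg, map_smul, ih] at this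
    simpa using this

/-- squared norms -/
noncomputable def hL (a : ℝ) (n : ℕ) : ℝ := (n.factorial : ℝ) * Real.Gamma (n + a + 1)

lemma hL_succ (a : ℝ) (ha : -1 < a) (n : ℕ) :
    hL a (n + 1) = ((n : ℝ) + 1) * (n + 1 + a) * hL a n := by
  rw [hL, hL, Gsucc a ha, Nat.factorial_succ]; push_cast; ring

open Polynomial in
lemma polP_rec' (a : ℝ) (ha : -1 < a) (n : ℕ) : X * polP a n =
    polP a (n + 1) + C (2 * (n : ℝ) + a + 1) * polP a n +
      C ((n : ℝ) * (n + a)) * polP a (n - 1) := by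
  rcases n with _ | n
  · simp [polP_zero a ha, polP_one a ha]
  · rw [polP_rec a ha]
    congr 2
    · congr 2; push_cast; ring
    · push_cast; rfl

open Polynomial in
lemma orth (a : ℝ) (ha : -1 < a) (j : ℕ) :
    ∀ k, j ≤ k → momL a (polP a j * polP a k) = if j = k then hL a k else 0 := by
  induction j using Nat.strong_induction_on with
  | _ j ih =>
  intro k hjk
  rcases j with _ | j
  · rw [polP_zero a ha, one_mul]
    rcases k with _ | k
    · rw [polP_zero a ha, ← monomial_zero_one, momL_monomial]
      simp [hL]
    · rw [momL_polP a ha]; simp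
  · obtain ⟨k, rfl⟩ : ∃ i, k = i + 1 := ⟨k - 1, by omega⟩
    have r1 := polP_rec' a ha j
    have r2 := polP_rec a ha k
    have e : polP a (j+1) * polP a (k+1) = polP a j * polP a (k + 2) +
        (2 * (k : ℝ) + a + 3) • (polP a j * polP a (k + 1)) +
        (((k : ℝ) + 1) * (k + 1 + a)) • (polP a j * polP a k)
        - (2 * (j : ℝ) + a + 1) • (polP a j * polP a (k+1))
        - ((j : ℝ) * (j + a)) • (polP a (j-1) * polP a (k+1)) := by
      simp only [smul_eq_C_mul]
      linear_combination polP a j * r2 - polP a (k+1) * r1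
    rw [e]
    simp only [map_add, map_sub, map_smul]
    rw [ih j (by omega) (k+2) (by omega), ih j (by omega) (k+1) (by omega),
      ih j (by omega) k (by omega), ih (j-1) (by omega) (k+1) (by omega),
      if_neg (by omega), if_neg (by omega), if_neg (show ¬ (j - 1 = k + 1) by omega), hL_succ a ha]
    by_cases h : j = k
    · simp [h]
    · simp [h]

lemma orth' (a : ℝ) (ha : -1 < a) (j k : ℕ) :
    momL a (polP a j * polP a k) = if j = k then hL a k else 0 := by
  rcases le_total j k with h | h
  · exact orth a ha j k h
  · rw [mul_comm, orth a ha k j h]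
    by_cases e : j = k
    · simp [e]
    · simp [e, Ne.symm e]

open Polynomial in
/-- The skew form as a bilinear form on polynomials. -/
noncomputable def skewB (a : ℝ) (P Q : ℝ[X]) : ℝ :=
  (1 / 2) * momL a (X * (P * derivative Q - derivative P * Q))

open Polynomial in
lemma sip_eq_s8 (a : ℝ) (ha : -1 < a) (P Q : ℝ[X]) :
    sip4L a (fun x => P.eval x) (fun x => Q.eval x) = skewB a P Q := by
  rw [skewB, ← (integral_momL a ha _).2, sip4L]
  simp only [Polynomial.deriv, eval_sub, eval_mul]

open Polynomial in
lemma skewB_eq (a : ℝ) (ha : -1 < a) (P Q : ℝ[X]) :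
    skewB a P Q = momL a (P * (X * derivative Q + C ((a + 1) / 2) * Q - C (1 / 2) * (X * Q))) := by
  have h := momL_ibp a ha (P * Q)
  have e : P * (X * derivative Q + C ((a + 1) / 2) * Q - C (1 / 2) * (X * Q)) =
     (1 / 2 : ℝ) • (X * (P * derivative Q - derivative P * Q)) +
     (1 / 2 : ℝ) • (X * derivative (P * Q) + C (a + 1) * (P * Q) - X * (P * Q)) := by
    have e1 : C ((a + 1) / 2) = C (1 / 2) * C (a + 1) := by rw [← C_mul]; congr 1; ring
    have e2 : (C (1 / 2) + C (1 / 2) : ℝ[X]) = 1 := by rw [← C_add, ← C_1]; congr 1; norm_num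
    rw [derivative_mul, smul_eq_C_mul, smul_eq_C_mul, e1]
    linear_combination (-(P * X * derivative Q)) * e2
  rw [e, map_add, map_smul, map_smul, h, skewB]
  simp

open Polynomial in
lemma skewB_polP (a : ℝ) (ha : -1 < a) (j k : ℕ) : skewB a (polP a j) (polP a k) =
    (1 / 2) * ((if j + 1 = k then hL a k else 0) - (if j = k + 1 then hL a j else 0)) := by
  rw [skewB_eq a ha]
  rcases k with _ | k
  · have r := polP_rec' a ha 0
    have e : polP a j * (X * derivative (polP a 0) + C ((a + 1) / 2) * polP a 0
        - C (1 / 2) * (X * polP a 0)) = (-(1 / 2) : ℝ) • (polP a j * polP a 1) := by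
      rw [r, smul_eq_C_mul, polP_zero a ha]
      have e1 : C ((a + 1) / 2) = C (1 / 2) * C (a + 1) := by rw [← C_mul]; congr 1; ring
      rw [e1]
      simp
      ring
    rw [e, map_smul, orth' a ha]
    by_cases h : j = 1
    · simp [h]
    · simp [h]
  · have e : polP a j * (X * derivative (polP a (k+1)) + C ((a + 1) / 2) * polP a (k+1)
        - C (1 / 2) * (X * polP a (k+1))) = (-(1 / 2) : ℝ) • (polP a j * polP a (k+2)) +
        ((1/2) * (((k : ℝ) + 1) * (k + 1 + a))) • (polP a j * polP a k) := by
      rw [polP_rec a ha, polP_deriv a ha, smul_eq_C_mul, smul_eq_C_mul]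
      have e1 : C ((a + 1) / 2) = C (1 / 2) * C (a + 1) := by rw [← C_mul]; congr 1; ring
      have e2 : (C (1 / 2) + C (1 / 2) : ℝ[X]) = 1 := by rw [← C_add, ← C_1]; congr 1; norm_num
      rw [e1, C_neg, C_mul]
      simp only [map_add, map_mul, map_one, map_ofNat, map_natCast]
      linear_combination (-(polP a j * (((k:ℝ[X]) + 1) * polP a (k+1) + ((k:ℝ[X]) + 1) * (k + 1 + C a) * polP a k))) * e2
    rw [e, map_add, map_smul, map_smul, orth' a ha, orth' a ha]
    have i1 : (j + 1 = k + 1) ↔ j = k := by omega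
    have i2 : j = k + 1 + 1 ↔ j = k + 2 := by omega
    simp only [i1, i2, smul_eq_mul]
    by_cases h : j = k + 2
    · subst h; simp
    · by_cases h' : j = k
      · subst h'; simp [hL_succ a ha]; ring
      · simp [h, h']

/-- normalisation constants -/
noncomputable def cL (a : ℝ) (i : ℕ) : ℝ :=
  2 ^ (2 * i) * (Nat.factorial i) * Real.Gamma (a / 2 + (i : ℝ) + 1)

lemma cL_pos (a : ℝ) (ha : -1 < a) (i : ℕ) : 0 < cL a i := by
  have hk : (0:ℝ) ≤ i := Nat.cast_nonneg i
  have := Real.Gamma_pos_of_pos (s := a / 2 + (i : ℝ) + 1) (by linarith)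
  unfold cL; positivity

lemma cL_succ (a : ℝ) (ha : -1 < a) (i : ℕ) :
    cL a (i + 1) = (2 * i + 2) * (2 * i + 2 + a) * cL a i := by
  have hk : (0:ℝ) ≤ i := Nat.cast_nonneg i
  have := Real.Gamma_add_one (s := a / 2 + (i : ℝ) + 1) (by linarith)
  rw [cL, cL, show a / 2 + ((i + 1 : ℕ) : ℝ) + 1 = a / 2 + (i : ℝ) + 1 + 1 by push_cast; ring,
    this, Nat.factorial_succ]
  push_cast
  ring

open Polynomial in
/-- Even members. -/
noncomputable def polE (a : ℝ) (m : ℕ) : ℝ[X] :=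
  ∑ i ∈ range (m + 1), (cL a m / cL a i) • polP a (2 * i)

lemma qLSE_even (a : ℝ) (m : ℕ) : qLSE a (2 * m) = fun x => (polE a m).eval x := by
  funext x
  have h : (2 * m) % 2 = 0 := by omega
  have h2 : 2 * m / 2 = m := by omega
  simp only [qLSE, h, h2, polE, Polynomial.eval_finsetSum, Polynomial.eval_smul, polP_eval,
    Finset.mul_sum, smul_eq_mul]
  simp only [zero_ne_one, if_false]
  refine Finset.sum_congr rfl fun i _ => ?_
  rw [cL, cL]; ring

lemma qLSE_odd (a : ℝ) (m : ℕ) : qLSE a (2 * m + 1) = fun x => (polP a (2 * m + 1)).eval x := by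
  funext x
  have h : (2 * m + 1) % 2 = 1 := by omega
  simp [qLSE, h, polP_eval]

open Polynomial in
lemma skewB_sum_left (a : ℝ) (s : Finset ℕ) (c : ℕ → ℝ) (f : ℕ → ℝ[X]) (Q : ℝ[X]) :
    skewB a (∑ i ∈ s, c i • f i) Q = ∑ i ∈ s, c i * skewB a (f i) Q := by
  simp only [skewB, derivative_sum, derivative_smul, Finset.sum_mul, ← Finset.sum_sub_distrib,
    Finset.mul_sum, map_sum]
  refine Finset.sum_congr rfl fun i _ => ?_
  rw [smul_mul_assoc, smul_mul_assoc, ← smul_sub, mul_smul_comm, map_smul, smul_eq_mul]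
  ring

open Polynomial in
lemma skewB_swap (a : ℝ) (P Q : ℝ[X]) : skewB a P Q = - skewB a Q P := by
  rw [skewB, skewB, show X * (P * derivative Q - derivative P * Q) =
    - (X * (Q * derivative P - derivative Q * P)) by ring, map_neg]
  ring

lemma skewB_even_even (a : ℝ) (ha : -1 < a) (m n : ℕ) : skewB a (polE a m) (polE a n) = 0 := by
  rw [polE, skewB_sum_left]
  refine Finset.sum_eq_zero fun i _ => ?_
  rw [skewB_swap, polE, skewB_sum_left, Finset.sum_eq_zero, neg_zero, mul_zero]
  intro k _
  rw [skewB_polP a ha, if_neg (by omega), if_neg (by omega)]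
  simp

lemma sum_even_odd (a : ℝ) (ha : -1 < a) (n m : ℕ) :
    ∑ i ∈ range (m + 1), skewB a (polP a (2 * i)) (polP a (2 * n + 1)) / cL a i =
      if m = n then (1 / 2) * hL a (2 * n + 1) / cL a n else 0 := by
  have key : ∀ i, skewB a (polP a (2 * i)) (polP a (2 * n + 1)) =
      (1 / 2) * ((if i = n then hL a (2 * n + 1) else 0) -
        (if i = n + 1 then hL a (2 * i) else 0)) := by
    intro i
    rw [skewB_polP a ha]
    have i1 : 2 * i + 1 = 2 * n + 1 ↔ i = n := by omega
    have i2 : 2 * i = 2 * n + 1 + 1 ↔ i = n + 1 := by omega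
    simp only [i1, i2]
  induction m with
  | zero =>
    simp only [zero_add, Finset.range_one, Finset.sum_singleton, key]
    by_cases h : 0 = n
    · subst h; simp
    · simp [h]
  | succ m ih =>
    rw [Finset.sum_range_succ, ih, key]
    by_cases h : m = n
    · subst h
      have h1 := hL_succ a ha (2 * m + 1)
      have h2 := cL_succ a ha m
      have h3 := cL_pos a ha m
      have h4 := cL_pos a ha (m + 1)
      have : hL a (2 * (m + 1)) = cL a (m + 1) / cL a m * hL a (2 * m + 1) := by
        rw [show 2 * (m + 1) = 2 * m + 1 + 1 by ring, h1, h2]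
        field_simp
        push_cast
        ring
      simp [this]
      field_simp
      ring
    · by_cases h' : m + 1 = n
      · subst h'; simp
      · simp [h, h']

lemma skewB_even_odd (a : ℝ) (ha : -1 < a) (m n : ℕ) :
    skewB a (polE a m) (polP a (2 * n + 1)) =
      if m = n then (1 / 2) * hL a (2 * n + 1) else 0 := by
  have h := sum_even_odd a ha n m
  have h3 := cL_pos a ha m
  rw [polE, skewB_sum_left]
  have : ∑ i ∈ range (m + 1), cL a m / cL a i * skewB a (polP a (2 * i)) (polP a (2 * n + 1)) =
      cL a m * ∑ i ∈ range (m + 1), skewB a (polP a (2 * i)) (polP a (2 * n + 1)) / cL a i := by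
    rw [Finset.mul_sum]
    exact Finset.sum_congr rfl fun i _ => by ring
  rw [this, h]
  split_ifs with e
  · subst e; field_simp
  · simp

/-- The family `{q̃_j}` is skew orthogonal for the β = 4 Laguerre skew inner product,
with normalizations `r̃_m = (1/2) Γ(2m+2) Γ(a+2m+2)`. -/
theorem laguerre_skew_orthogonal_beta4 (a : ℝ) (ha : -1 < a) (m n : ℕ) :
    sip4L a (qLSE a (2 * m)) (qLSE a (2 * n)) = 0 ∧
    sip4L a (qLSE a (2 * m + 1)) (qLSE a (2 * n + 1)) = 0 ∧
    (m ≠ n → sip4L a (qLSE a (2 * m)) (qLSE a (2 * n + 1)) = 0) ∧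
    sip4L a (qLSE a (2 * m)) (qLSE a (2 * m + 1))
      = (1 / 2) * Real.Gamma (2 * (m : ℝ) + 2) * Real.Gamma (a + 2 * (m : ℝ) + 2) := by
  simp only [qLSE_even, qLSE_odd, sip_eq_s8 a ha]
  refine ⟨skewB_even_even a ha m n, ?_, fun h => ?_, ?_⟩
  · rw [skewB_polP a ha, if_neg (by omega), if_neg (by omega)]
    simp
  · rw [skewB_even_odd a ha, if_neg h]
  · rw [skewB_even_odd a ha, if_pos rfl, hL, ← Real.Gamma_nat_eq_factorial]
    push_cast
    rw [show 2 * (m : ℝ) + 1 + 1 = 2 * m + 2 by ring,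
      show 2 * (m : ℝ) + 1 + a + 1 = a + 2 * m + 2 by ring]
    ring
end

section
/- Let a, b > 0 be real. Define q̃_{2m}(x) = p_{2m}(x) and q̃_{2m+1}(x) = p_{2m+1}(x) − [8m(2m+a)(2m+b)(a+b+2m) / ((a+b+4m−1)(a+b+4m)(a+b+4m+1)(a+b+4m+2))]·p_{2m−1}(x) (with p_{−1} = 0), where p_k are the monic Jacobi polynomials with parameters a, b. Then the family {q̃_j} is skew orthogonal with respect to the β = 1 skew inner product with weight (1−x)^{(a−1)/2}(1+x)^{(b−1)/2} on (−1, 1): for all natural numbers m, n one has ⟨q̃_{2m}, q̃_{2n}⟩₁ = 0, ⟨q̃_{2m+1}, q̃_{2n+1}⟩₁ = 0, and ⟨q̃_{2m}, q̃_{2n+1}⟩₁ = 0 if m ≠ n, while ⟨q̃_{2m}, q̃_{2m+1}⟩₁ = 2^{a+b+4m+2} (2m)! Γ(a+2m+1)Γ(b+2m+1)Γ(a+b+2m+1) / (Γ(a+b+4m+1)Γ(a+b+4m+3)). -/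
open MeasureTheory Finset

/-- The skew orthogonal candidates: `q̃_{2m} = p_{2m}`, and `q̃_{2m+1} = p_{2m+1} −
[8m(2m+a)(2m+b)(a+b+2m)/((a+b+4m−1)(a+b+4m)(a+b+4m+1)(a+b+4m+2))] p_{2m−1}`. -/
noncomputable def qJOE (a b : ℝ) (j : ℕ) (x : ℝ) : ℝ :=
  if j % 2 = 0 then jacobiMonic a b j x
  else jacobiMonic a b j x -
    (4 * ((j : ℝ) - 1) * (((j : ℝ) - 1) + a) * (((j : ℝ) - 1) + b) * (a + b + ((j : ℝ) - 1)) /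
      ((a + b + 2 * ((j : ℝ) - 1) - 1) * (a + b + 2 * ((j : ℝ) - 1)) *
        (a + b + 2 * ((j : ℝ) - 1) + 1) * (a + b + 2 * ((j : ℝ) - 1) + 2)))
      * jacobiMonic a b (j - 2) x

/-- The β = 1 skew inner product with weight `(1−x)^{(a−1)/2} (1+x)^{(b−1)/2}` on `(−1, 1)`. -/
noncomputable def sip1J (a b : ℝ) (f g : ℝ → ℝ) : ℝ :=
  (1 / 2) * ∫ x in Set.Ioo (-1 : ℝ) 1, ∫ y in Set.Ioo (-1 : ℝ) 1,
    ((1 - x) ^ ((a - 1) / 2) * (1 + x) ^ ((b - 1) / 2)) *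
    ((1 - y) ^ ((a - 1) / 2) * (1 + y) ^ ((b - 1) / 2)) *
      Real.sign (y - x) * f x * g y

open Polynomial

lemma aux_int01 (c d : ℝ) (hc : -1 < c) (hd : -1 < d) :
    IntervalIntegrable (fun x : ℝ => x ^ d * (1 - x) ^ c) volume 0 1 ∧
    ∫ x in (0:ℝ)..1, x ^ d * (1 - x) ^ c =
      Real.Gamma (d + 1) * Real.Gamma (c + 1) / Real.Gamma (c + d + 2) := by
  have hcv := Complex.betaIntegral_convergent (u := ((d + 1 : ℝ) : ℂ)) (v := ((c + 1 : ℝ) : ℂ))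
    (by rw [Complex.ofReal_re]; linarith) (by rw [Complex.ofReal_re]; linarith)
  have key : ∀ x ∈ Set.Ioc (0:ℝ) 1, (x : ℂ) ^ (((d + 1 : ℝ) : ℂ) - 1) *
      (1 - (x : ℂ)) ^ (((c + 1 : ℝ) : ℂ) - 1) = ((x ^ d * (1 - x) ^ c : ℝ) : ℂ) := by
    intro x hx
    have h1 : (((d + 1 : ℝ) : ℂ) - 1) = (d : ℂ) := by push_cast; ring
    have h2 : (((c + 1 : ℝ) : ℂ) - 1) = (c : ℂ) := by push_cast; ring
    rw [h1, h2, Complex.ofReal_mul, Complex.ofReal_cpow hx.1.le,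
      Complex.ofReal_cpow (by linarith [hx.2])]
    push_cast
    rfl
  have hB := ProbabilityTheory.beta_eq_betaIntegralReal (d + 1) (c + 1) (by linarith) (by linarith)
  rw [Complex.betaIntegral, intervalIntegral.integral_of_le zero_le_one,
    setIntegral_congr_fun measurableSet_Ioc key] at hB
  constructor
  · rw [intervalIntegrable_iff_integrableOn_Ioc_of_le zero_le_one] at hcv ⊢
    have := (hcv.congr_fun key measurableSet_Ioc).re
    simpa [IntegrableOn] using this
  · rw [intervalIntegral.integral_of_le zero_le_one]
    rw [integral_complex_ofReal, Complex.ofReal_re, ProbabilityTheory.beta] at hB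
    rw [← hB]
    congr 2
    ring

lemma aux_pt (c d x : ℝ) (hx : x ∈ Set.Ioo (-1 : ℝ) 1) :
    (1 - x) ^ c * (1 + x) ^ d =
      2 ^ (c + d) * ((1 / 2 * x + 1 / 2) ^ d * (1 - (1 / 2 * x + 1 / 2)) ^ c) := by
  have h1 : 1 - x = 2 * (1 - (1 / 2 * x + 1 / 2)) := by ring
  have h2 : 1 + x = 2 * (1 / 2 * x + 1 / 2) := by ring
  rw [h1, h2, Real.mul_rpow (by norm_num) (by linarith [hx.2]),
    Real.mul_rpow (by norm_num) (by linarith [hx.1]), Real.rpow_add (by norm_num)]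
  ring

lemma aux_w (c d : ℝ) (hc : -1 < c) (hd : -1 < d) :
    IntegrableOn (fun x : ℝ => (1 - x) ^ c * (1 + x) ^ d) (Set.Ioo (-1) 1) ∧
    ∫ x in Set.Ioo (-1 : ℝ) 1, (1 - x) ^ c * (1 + x) ^ d =
      2 ^ (c + d + 1) * (Real.Gamma (d + 1) * Real.Gamma (c + 1) / Real.Gamma (c + d + 2)) := by
  obtain ⟨h1, h2⟩ := aux_int01 c d hc hd
  constructor
  · have h3 := (h1.comp_add_right (1/2)).comp_mul_left (c := 1/2)
    norm_num at h3
    have h4 := (h3.const_mul (2 ^ (c + d)))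
    rw [intervalIntegrable_iff_integrableOn_Ioo_of_le (by norm_num)] at h4
    refine h4.congr_fun ?_ measurableSet_Ioo
    intro x hx
    simp only []
    rw [aux_pt c d x hx]
  · rw [setIntegral_congr_fun measurableSet_Ioo (fun x hx => aux_pt c d x hx),
      ← integral_Ioc_eq_integral_Ioo, ← intervalIntegral.integral_of_le (by norm_num),
      intervalIntegral.integral_const_mul]
    have := intervalIntegral.integral_comp_mul_add (a := -1) (b := 1)
      (fun x : ℝ => x ^ d * (1 - x) ^ c) (c := 1/2) (by norm_num) (1/2)
    rw [this]
    norm_num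
    rw [h2, Real.rpow_add_one (by norm_num)]
    ring

lemma aux_poly (c d : ℝ) (hc : -1 < c) (hd : -1 < d) (p : ℝ[X]) :
    IntegrableOn (fun x : ℝ => (1 - x) ^ c * (1 + x) ^ d * p.eval x) (Set.Ioo (-1) 1) := by
  obtain ⟨M, hM⟩ := isCompact_Icc.exists_bound_of_continuousOn
    (p.continuous.continuousOn (s := Set.Icc (-1 : ℝ) 1))
  refine Integrable.mul_bdd (c := M) (aux_w c d hc hd).1 p.continuous.aestronglyMeasurable ?_
  filter_upwards [ae_restrict_mem measurableSet_Ioo] with x hx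
  exact hM x ⟨hx.1.le, hx.2.le⟩

/-- First-order operator. -/
noncomputable def opT (c d : ℝ) (h : ℝ[X]) : ℝ[X] :=
  (1 - X ^ 2) * derivative h + (C (d - c) - C (c + d + 2) * X) * h

lemma aux_deriv (c d : ℝ) (h : ℝ[X]) (x : ℝ) (hx : x ∈ Set.Ioo (-1 : ℝ) 1) :
    HasDerivAt (fun x : ℝ => (1 - x) ^ (c + 1) * (1 + x) ^ (d + 1) * h.eval x)
      ((1 - x) ^ c * (1 + x) ^ d * (opT c d h).eval x) x := by
  have p1 : (0:ℝ) < 1 - x := by linarith [hx.2]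
  have p2 : (0:ℝ) < 1 + x := by linarith [hx.1]
  have d1 := ((hasDerivAt_id x).const_sub 1).rpow_const (p := c + 1) (Or.inl p1.ne')
  have d2 := ((hasDerivAt_id x).const_add 1).rpow_const (p := d + 1) (Or.inl p2.ne')
  refine ((d1.mul d2).mul (h.hasDerivAt x)).congr_deriv ?_
  simp only [opT, id, Pi.mul_apply, add_sub_cancel_right, eval_add, eval_mul, eval_sub, eval_one, eval_pow, eval_X,
    eval_C]
  rw [Real.rpow_add_one p1.ne', Real.rpow_add_one p2.ne']
  ring

lemma aux_ftc (c d : ℝ) (hc : -1 < c) (hd : -1 < d) (h : ℝ[X]) (u v : ℝ) (hu : -1 ≤ u)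
    (hv : v ≤ 1) (huv : u ≤ v) :
    ∫ x in Set.Ioo u v, (1 - x) ^ c * (1 + x) ^ d * (opT c d h).eval x =
      (1 - v) ^ (c + 1) * (1 + v) ^ (d + 1) * h.eval v -
      (1 - u) ^ (c + 1) * (1 + u) ^ (d + 1) * h.eval u := by
  rw [← integral_Ioc_eq_integral_Ioo, ← intervalIntegral.integral_of_le huv]
  refine intervalIntegral.integral_eq_sub_of_hasDerivAt_of_le huv
    (f := fun x : ℝ => (1 - x) ^ (c + 1) * (1 + x) ^ (d + 1) * h.eval x) ?_ ?_ ?_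
  · refine Continuous.continuousOn ?_
    refine ((Continuous.rpow_const (by fun_prop) ?_).mul
      (Continuous.rpow_const (by fun_prop) ?_)).mul h.continuous
    · intro x; right; linarith
    · intro x; right; linarith
  · intro x hx
    exact aux_deriv c d h x ⟨by linarith [hx.1], by linarith [hx.2]⟩
  · rw [intervalIntegrable_iff_integrableOn_Ioo_of_le huv]
    exact (aux_poly c d hc hd _).mono_set (Set.Ioo_subset_Ioo hu hv)

/-- Moment functional. -/
noncomputable def mI (a b : ℝ) (f : ℝ[X]) : ℝ :=
  ∫ x in Set.Ioo (-1 : ℝ) 1, (1 - x) ^ a * (1 + x) ^ b * f.eval x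

lemma mI_add (a b : ℝ) (ha : -1 < a) (hb : -1 < b) (f g : ℝ[X]) :
    mI a b (f + g) = mI a b f + mI a b g := by
  simp only [mI, eval_add, mul_add]
  exact integral_add (aux_poly a b ha hb f) (aux_poly a b ha hb g)

lemma mI_C (a b : ℝ) (r : ℝ) (f : ℝ[X]) : mI a b (C r * f) = r * mI a b f := by
  simp only [mI, eval_mul, eval_C]
  rw [← integral_const_mul]
  congr 1; ext x; ring

lemma mI_sub (a b : ℝ) (ha : -1 < a) (hb : -1 < b) (f g : ℝ[X]) :
    mI a b (f - g) = mI a b f - mI a b g := by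
  have := mI_add a b ha hb f (C (-1) * g)
  rw [mI_C] at this
  rw [show f - g = f + C (-1) * g by simp [sub_eq_add_neg], this]; ring

lemma mI_one (a b : ℝ) (ha : -1 < a) (hb : -1 < b) : mI a b 1 =
    2 ^ (a + b + 1) * (Real.Gamma (b + 1) * Real.Gamma (a + 1) / Real.Gamma (a + b + 2)) := by
  rw [← (aux_w a b ha hb).2]; simp [mI]

lemma mI_opT (a b : ℝ) (ha : -1 < a) (hb : -1 < b) (h : ℝ[X]) : mI a b (opT a b h) = 0 := by
  rw [mI, aux_ftc a b ha hb h (-1) 1 le_rfl le_rfl (by norm_num)]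
  rw [sub_self, Real.zero_rpow (by linarith), show (1:ℝ) + -1 = 0 by norm_num,
    Real.zero_rpow (x := b + 1) (by linarith)]
  ring

lemma mI_succ (a b : ℝ) (h : ℝ[X]) : mI (a + 1) (b + 1) h = mI a b ((1 - X ^ 2) * h) := by
  refine setIntegral_congr_fun measurableSet_Ioo (fun x hx => ?_)
  have p1 : (0:ℝ) < 1 - x := by linarith [hx.2]
  have p2 : (0:ℝ) < 1 + x := by linarith [hx.1]
  simp only [eval_mul, eval_sub, eval_one, eval_pow, eval_X]
  rw [Real.rpow_add_one p1.ne', Real.rpow_add_one p2.ne']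
  ring

lemma mI_ladder (a b : ℝ) (ha : -1 < a) (hb : -1 < b) (g f : ℝ[X]) :
    mI a b (opT a b g * f) = - mI (a + 1) (b + 1) (g * derivative f) := by
  have h := mI_opT a b ha hb (g * f)
  have e : opT a b (g * f) = opT a b g * f + (1 - X ^ 2) * (g * derivative f) := by
    simp only [opT, derivative_mul]; ring
  rw [e, mI_add a b ha hb, ← mI_succ] at h
  linarith

/-- The skew-symmetric operator. -/
noncomputable def opD (a b : ℝ) (h : ℝ[X]) : ℝ[X] := opT ((a - 1) / 2) ((b - 1) / 2) h

lemma mI_skew (a b : ℝ) (ha : -1 < a) (hb : -1 < b) (f g : ℝ[X]) :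
    mI a b (opD a b f * g) = - mI a b (f * opD a b g) := by
  have h := mI_opT a b ha hb (f * g)
  have e : opT a b (f * g) = opD a b f * g + f * opD a b g := by
    have e1 : (C (b - a) : ℝ[X]) = 2 * C ((b - 1) / 2 - (a - 1) / 2) := by
      rw [show (2 : ℝ[X]) = C 2 from (map_ofNat C 2).symm, ← C_mul]; congr 1; ring
    have e2 : (C (a + b + 2) : ℝ[X]) = 2 * C ((a - 1) / 2 + (b - 1) / 2 + 2) := by
      rw [show (2 : ℝ[X]) = C 2 from (map_ofNat C 2).symm, ← C_mul]; congr 1; ring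
    simp only [opD, opT, derivative_mul, e1, e2]; ring
  rw [e, mI_add a b ha hb] at h
  linarith

/-! The skew inner product. -/

/-- kernel -/
noncomputable def kerF (a b : ℝ) (f g : ℝ[X]) (z : ℝ × ℝ) : ℝ :=
    ((1 - z.1) ^ ((a - 1) / 2) * (1 + z.1) ^ ((b - 1) / 2)) *
    ((1 - z.2) ^ ((a - 1) / 2) * (1 + z.2) ^ ((b - 1) / 2)) *
      Real.sign (z.2 - z.1) * f.eval z.1 * g.eval z.2

lemma measurable_rsign : Measurable Real.sign := by
  unfold Real.sign
  exact Measurable.ite measurableSet_Iio measurable_const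
    (Measurable.ite measurableSet_Ioi measurable_const measurable_const)

lemma rsign_bound (r : ℝ) : ‖Real.sign r‖ ≤ 1 := by
  rcases Real.sign_apply_eq r with h | h | h <;> rw [h] <;> norm_num

lemma kerF_int (a b : ℝ) (ha : 0 < a) (hb : 0 < b) (f g : ℝ[X]) :
    Integrable (kerF a b f g) ((volume.restrict (Set.Ioo (-1 : ℝ) 1)).prod
      (volume.restrict (Set.Ioo (-1 : ℝ) 1))) := by
  have h1 := aux_poly ((a - 1) / 2) ((b - 1) / 2) (by linarith) (by linarith) f
  have h2 := aux_poly ((a - 1) / 2) ((b - 1) / 2) (by linarith) (by linarith) g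
  have h3 := Integrable.mul_prod h1 h2
  have h4 := h3.bdd_mul (c := 1) (f := fun z : ℝ × ℝ => Real.sign (z.2 - z.1))
    (measurable_rsign.comp (measurable_snd.sub measurable_fst)).aestronglyMeasurable
    (Filter.Eventually.of_forall fun z => rsign_bound _)
  refine h4.congr (Filter.Eventually.of_forall fun z => ?_)
  simp only [kerF]; ring

/-- skew product on polynomials -/
noncomputable def skw (a b : ℝ) (f g : ℝ[X]) : ℝ :=
  sip1J a b (fun x => f.eval x) (fun x => g.eval x)

lemma skw_eq (a b : ℝ) (ha : 0 < a) (hb : 0 < b) (f g : ℝ[X]) :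
    skw a b f g = 1 / 2 * ∫ z, kerF a b f g z ∂((volume.restrict (Set.Ioo (-1 : ℝ) 1)).prod
      (volume.restrict (Set.Ioo (-1 : ℝ) 1))) := by
  rw [integral_prod _ (kerF_int a b ha hb f g)]
  rfl

lemma skw_add (a b : ℝ) (ha : 0 < a) (hb : 0 < b) (f g h : ℝ[X]) :
    skw a b f (g + h) = skw a b f g + skw a b f h := by
  simp only [skw_eq a b ha hb]
  rw [← mul_add, ← integral_add (kerF_int a b ha hb f g) (kerF_int a b ha hb f h)]
  congr 1; refine integral_congr_ae (Filter.Eventually.of_forall fun z => ?_); simp only [kerF, eval_add]; ring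

lemma skw_C (a b : ℝ) (ha : 0 < a) (hb : 0 < b) (r : ℝ) (f g : ℝ[X]) :
    skw a b f (C r * g) = r * skw a b f g := by
  simp only [skw_eq a b ha hb]
  rw [mul_left_comm, ← integral_const_mul r]
  congr 1; refine integral_congr_ae (Filter.Eventually.of_forall fun z => ?_); simp only [kerF, eval_mul, eval_C]; ring

lemma skw_swap (a b : ℝ) (ha : 0 < a) (hb : 0 < b) (f g : ℝ[X]) :
    skw a b f g = - skw a b g f := by
  simp only [skw_eq a b ha hb]
  rw [← integral_prod_swap, ← mul_neg, ← integral_neg]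
  congr 1
  refine integral_congr_ae (Filter.Eventually.of_forall fun z => ?_)
  simp only [kerF, Prod.fst_swap, Prod.snd_swap]
  rw [show z.1 - z.2 = -(z.2 - z.1) by ring, Real.sign_neg]; ring

lemma sgn_int (F : ℝ → ℝ) (hF : IntegrableOn F (Set.Ioo (-1) 1)) (x : ℝ)
    (hx : x ∈ Set.Ioo (-1 : ℝ) 1) :
    ∫ y in Set.Ioo (-1 : ℝ) 1, Real.sign (y - x) * F y =
      (∫ y in Set.Ioo x 1, F y) - ∫ y in Set.Ioo (-1) x, F y := by
  have hu : Set.Ioo (-1 : ℝ) 1 = Set.Ioc (-1) x ∪ Set.Ioo x 1 :=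
    (Set.Ioc_union_Ioo_eq_Ioo hx.1.le hx.2).symm
  have hi : IntegrableOn (fun y => Real.sign (y - x) * F y) (Set.Ioo (-1) 1) :=
    hF.bdd_mul (c := 1) (measurable_rsign.comp (measurable_id.sub_const x)).aestronglyMeasurable
      (Filter.Eventually.of_forall fun z => rsign_bound _)
  rw [hu, setIntegral_union _ measurableSet_Ioo (hi.mono_set _) (hi.mono_set _),
    integral_Ioc_eq_integral_Ioo]
  · rw [setIntegral_congr_fun (g := fun y => - F y) measurableSet_Ioo,
      setIntegral_congr_fun (s := Set.Ioo x 1) (g := F) measurableSet_Ioo, integral_neg]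
    · ring
    · intro y hy
      simp only [Real.sign_of_pos (sub_pos.2 hy.1), one_mul]
    · intro y hy
      simp only [Real.sign_of_neg (sub_neg.2 hy.2)]; ring
  · rw [Set.disjoint_left]
    intro y h1 h2
    exact absurd h2.1 (not_lt.2 h1.2)
  · rw [hu]; exact Set.subset_union_left
  · rw [hu]; exact Set.subset_union_right

lemma skw_opD (a b : ℝ) (ha : 0 < a) (hb : 0 < b) (f h : ℝ[X]) :
    skw a b f (opD a b h) = - mI a b (f * h) := by
  have hc : -1 < (a - 1) / 2 := by linarith
  have hd : -1 < (b - 1) / 2 := by linarith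
  simp only [skw, sip1J, mI]
  rw [← integral_neg, ← integral_const_mul]
  refine setIntegral_congr_fun measurableSet_Ioo (fun x hx => ?_)
  have p1 : (0:ℝ) < 1 - x := by linarith [hx.2]
  have p2 : (0:ℝ) < 1 + x := by linarith [hx.1]
  have e : ∀ y : ℝ, ((1 - x) ^ ((a - 1) / 2) * (1 + x) ^ ((b - 1) / 2)) *
    ((1 - y) ^ ((a - 1) / 2) * (1 + y) ^ ((b - 1) / 2)) *
      Real.sign (y - x) * f.eval x * (opD a b h).eval y =
      ((1 - x) ^ ((a - 1) / 2) * (1 + x) ^ ((b - 1) / 2) * f.eval x) *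
      (Real.sign (y - x) * ((1 - y) ^ ((a - 1) / 2) * (1 + y) ^ ((b - 1) / 2) *
        (opT ((a - 1) / 2) ((b - 1) / 2) h).eval y)) := by
    intro y; simp only [opD]; ring
  simp only [e]
  rw [integral_const_mul, sgn_int _ (aux_poly _ _ hc hd _) x hx,
    aux_ftc _ _ hc hd h x 1 hx.1.le le_rfl hx.2.le,
    aux_ftc _ _ hc hd h (-1) x le_rfl hx.2.le hx.1.le]
  rw [sub_self, Real.zero_rpow (by linarith), show (1:ℝ) + -1 = 0 by norm_num,
    Real.zero_rpow (x := (b - 1) / 2 + 1) (by linarith)]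
  have q1 : (1 - x) ^ a = (1 - x) ^ ((a - 1) / 2) * (1 - x) ^ ((a - 1) / 2 + 1) := by
    rw [← Real.rpow_add p1]; congr 1; ring
  have q2 : (1 + x) ^ b = (1 + x) ^ ((b - 1) / 2) * (1 + x) ^ ((b - 1) / 2 + 1) := by
    rw [← Real.rpow_add p2]; congr 1; ring
  rw [q1, q2, eval_mul]
  ring

/-! Monic Jacobi polynomials as polynomials. -/

/-- Monic Jacobi polynomials through the raising relation. -/
noncomputable def mJ : ℕ → ℝ → ℝ → ℝ[X]
  | 0, _, _ => 1
  | n + 1, a, b => C (-(1 / ((n : ℝ) + a + b + 2))) * opT a b (mJ n (a + 1) (b + 1))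

lemma opT_C (c d r : ℝ) (h : ℝ[X]) : opT c d (C r * h) = C r * opT c d h := by
  simp only [opT, derivative_mul, derivative_C]; ring

lemma opT_add (c d : ℝ) (g h : ℝ[X]) : opT c d (g + h) = opT c d g + opT c d h := by
  simp only [opT, derivative_add]; ring

lemma coeff_X_deriv (h : ℝ[X]) (n : ℕ) : (X * derivative h).coeff n = n * h.coeff n := by
  cases n with
  | zero => simp
  | succ n => rw [coeff_X_mul, coeff_derivative]; push_cast; ring

lemma opT_coeff (c d : ℝ) (h : ℝ[X]) (n : ℕ) : (opT c d h).coeff (n + 1) =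
    h.coeff (n + 2) * (n + 2) + (d - c) * h.coeff (n + 1) - (n + (c + d + 2)) * h.coeff n := by
  have e : opT c d h = derivative h - X * (X * derivative h) + C (d - c) * h
      - C (c + d + 2) * (X * h) := by simp only [opT]; ring
  rw [e, coeff_sub, coeff_add, coeff_sub, coeff_X_mul, coeff_X_deriv, coeff_C_mul, coeff_C_mul,
    coeff_X_mul, coeff_derivative]
  push_cast
  ring

lemma opT_deg (c d : ℝ) (h : ℝ[X]) (n : ℕ) (hh : h.natDegree ≤ n) :
    (opT c d h).natDegree ≤ n + 1 := by
  rw [natDegree_le_iff_coeff_eq_zero] at hh ⊢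
  intro N hN
  obtain ⟨m, rfl⟩ : ∃ m, N = m + 1 := ⟨N - 1, by omega⟩
  rw [opT_coeff, hh (m + 2) (by omega), hh (m + 1) (by omega), hh m (by omega)]
  ring

lemma opT_lead (c d : ℝ) (h : ℝ[X]) (n : ℕ) (hh : h.natDegree ≤ n) :
    (opT c d h).coeff (n + 1) = - (n + (c + d + 2)) * h.coeff n := by
  rw [natDegree_le_iff_coeff_eq_zero] at hh
  rw [opT_coeff, hh (n + 2) (by omega), hh (n + 1) (by omega)]
  ring

lemma mJ_deg (n : ℕ) (a b : ℝ) : (mJ n a b).natDegree ≤ n := by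
  induction n generalizing a b with
  | zero => simp [mJ]
  | succ n ih =>
    exact (natDegree_C_mul_le _ _).trans (opT_deg _ _ _ _ (ih _ _))

lemma mJ_lead (n : ℕ) (a b : ℝ) (ha : 0 < a) (hb : 0 < b) : (mJ n a b).coeff n = 1 := by
  induction n generalizing a b with
  | zero => simp [mJ]
  | succ n ih =>
    rw [mJ, coeff_C_mul, opT_lead _ _ _ _ (mJ_deg n _ _), ih _ _ (by linarith) (by linarith)]
    have : (n : ℝ) + a + b + 2 ≠ 0 := by positivity
    field_simp
    ring

/-- Squared norms. -/
noncomputable def hN (n : ℕ) (a b : ℝ) : ℝ :=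
  2 ^ (a + b + 2 * n + 1) * (Nat.factorial n) * Real.Gamma (a + n + 1) * Real.Gamma (b + n + 1) *
    Real.Gamma (a + b + n + 1) / (Real.Gamma (a + b + 2 * n + 1) * Real.Gamma (a + b + 2 * n + 2))

lemma hN_pos (n : ℕ) (a b : ℝ) (ha : 0 < a) (hb : 0 < b) : 0 < hN n a b := by
  have g1 := Real.Gamma_pos_of_pos (show 0 < a + n + 1 by positivity)
  have g2 := Real.Gamma_pos_of_pos (show 0 < b + n + 1 by positivity)
  have g3 := Real.Gamma_pos_of_pos (show 0 < a + b + n + 1 by positivity)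
  have g4 := Real.Gamma_pos_of_pos (show 0 < a + b + 2 * n + 1 by positivity)
  have g5 := Real.Gamma_pos_of_pos (show 0 < a + b + 2 * n + 2 by positivity)
  unfold hN
  positivity

lemma hN_shift (n : ℕ) (a b : ℝ) (ha : 0 < a) (hb : 0 < b) :
    hN (n + 1) a b = (n + 1) / (n + a + b + 2) * hN n (a + 1) (b + 1) := by
  have g4 := Real.Gamma_pos_of_pos (show 0 < a + b + 2 * n + 3 by positivity)
  have g5 := Real.Gamma_pos_of_pos (show 0 < a + b + 2 * n + 4 by positivity)
  have e : Real.Gamma (a + b + n + 3) = (a + b + n + 2) * Real.Gamma (a + b + n + 2) := by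
    rw [← Real.Gamma_add_one (by positivity)]; congr 1; ring
  unfold hN
  push_cast [Nat.factorial_succ]
  rw [show a + b + 2 * ((n : ℝ) + 1) + 1 = a + b + 2 * n + 3 by ring,
    show a + b + 2 * ((n : ℝ) + 1) + 2 = a + b + 2 * n + 4 by ring,
    show a + ((n : ℝ) + 1) + 1 = a + n + 2 by ring,
    show b + ((n : ℝ) + 1) + 1 = b + n + 2 by ring,
    show a + b + ((n : ℝ) + 1) + 1 = a + b + n + 2 by ring,
    show a + 1 + (b + 1) + 2 * (n : ℝ) + 1 = a + b + 2 * n + 3 by ring,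
    show a + 1 + (b + 1) + 2 * (n : ℝ) + 2 = a + b + 2 * n + 4 by ring,
    show a + 1 + (n : ℝ) + 1 = a + n + 2 by ring,
    show b + 1 + (n : ℝ) + 1 = b + n + 2 by ring,
    show a + 1 + (b + 1) + (n : ℝ) + 1 = a + b + n + 3 by ring, e]
  have : (n : ℝ) + a + b + 2 ≠ 0 := by positivity
  field_simp
  ring

lemma hN_ratio (n : ℕ) (a b : ℝ) (ha : 0 < a) (hb : 0 < b) :
    hN (n + 1) a b = 4 * (n + 1) * (a + n + 1) * (b + n + 1) * (a + b + n + 1) /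
      ((a + b + 2 * n + 1) * (a + b + 2 * n + 2) ^ 2 * (a + b + 2 * n + 3)) * hN n a b := by
  have g4 := Real.Gamma_pos_of_pos (show 0 < a + b + 2 * n + 1 by positivity)
  have e0 : Real.Gamma (a + b + 2 * n + 2) = (a + b + 2 * n + 1) * Real.Gamma (a + b + 2 * n + 1) := by
    rw [← Real.Gamma_add_one (by positivity)]; congr 1; ring
  have e1 : Real.Gamma (a + b + 2 * n + 3) = (a + b + 2 * n + 2) * Real.Gamma (a + b + 2 * n + 2) := by
    rw [← Real.Gamma_add_one (by positivity)]; congr 1; ring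
  have e2 : Real.Gamma (a + b + 2 * n + 4) = (a + b + 2 * n + 3) * Real.Gamma (a + b + 2 * n + 3) := by
    rw [← Real.Gamma_add_one (by positivity)]; congr 1; ring
  have e3 : Real.Gamma (a + n + 2) = (a + n + 1) * Real.Gamma (a + n + 1) := by
    rw [← Real.Gamma_add_one (by positivity)]; congr 1; ring
  have e4 : Real.Gamma (b + n + 2) = (b + n + 1) * Real.Gamma (b + n + 1) := by
    rw [← Real.Gamma_add_one (by positivity)]; congr 1; ring
  have e5 : Real.Gamma (a + b + n + 2) = (a + b + n + 1) * Real.Gamma (a + b + n + 1) := by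
    rw [← Real.Gamma_add_one (by positivity)]; congr 1; ring
  have e6 : (2 : ℝ) ^ (a + b + 2 * n + 3) = 4 * 2 ^ (a + b + 2 * n + 1) := by
    rw [show a + b + 2 * (n : ℝ) + 3 = (a + b + 2 * n + 1) + 2 by ring,
      Real.rpow_add (by norm_num)]
    norm_num; ring
  unfold hN
  push_cast [Nat.factorial_succ]
  rw [show a + b + 2 * ((n : ℝ) + 1) + 1 = a + b + 2 * n + 3 by ring,
    show a + b + 2 * ((n : ℝ) + 1) + 2 = a + b + 2 * n + 4 by ring,
    show a + ((n : ℝ) + 1) + 1 = a + n + 2 by ring,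
    show b + ((n : ℝ) + 1) + 1 = b + n + 2 by ring,
    show a + b + ((n : ℝ) + 1) + 1 = a + b + n + 2 by ring, e6, e2, e1, e0, e3, e4, e5]
  have : a + b + 2 * (n : ℝ) + 1 ≠ 0 := by positivity
  have : a + b + 2 * (n : ℝ) + 2 ≠ 0 := by positivity
  have : a + b + 2 * (n : ℝ) + 3 ≠ 0 := by positivity
  field_simp

lemma mI_mJ (n : ℕ) (a b : ℝ) (ha : 0 < a) (hb : 0 < b) (f : ℝ[X]) (hf : f.natDegree ≤ n) :
    mI a b (mJ n a b * f) = f.coeff n * hN n a b := by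
  induction n generalizing a b f with
  | zero =>
    rw [natDegree_le_iff_coeff_eq_zero] at hf
    have : f = C (f.coeff 0) := eq_C_of_natDegree_le_zero (natDegree_le_iff_coeff_eq_zero.2 hf)
    rw [this, mJ, mul_comm, mI_C, mI_one a b (by linarith) (by linarith), hN]
    have g4 := Real.Gamma_pos_of_pos (show 0 < a + b + 1 by positivity)
    simp
    field_simp
    left; trivial
  | succ n ih =>
    rw [mJ, mul_assoc, mI_C, mI_ladder a b (by linarith) (by linarith),
      ih (a + 1) (b + 1) (by linarith) (by linarith) _
        ((natDegree_derivative_le f).trans (by omega)), hN_shift n a b ha hb, coeff_derivative]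
    ring

/-- Leading coefficient of the skew operator. -/
noncomputable def al (a b : ℝ) (k : ℕ) : ℝ := -((k : ℝ) + (a + b + 2) / 2)

lemma al_ne (a b : ℝ) (ha : 0 < a) (hb : 0 < b) (k : ℕ) : al a b k ≠ 0 := by
  have : 0 < (k : ℝ) + (a + b + 2) / 2 := by positivity
  unfold al; linarith

lemma opD_deg (a b : ℝ) (h : ℝ[X]) (n : ℕ) (hh : h.natDegree ≤ n) :
    (opD a b h).natDegree ≤ n + 1 := opT_deg _ _ _ _ hh

lemma opD_lead (a b : ℝ) (h : ℝ[X]) (n : ℕ) (hh : h.natDegree ≤ n) :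
    (opD a b h).coeff (n + 1) = al a b n * h.coeff n := by
  rw [opD, opT_lead _ _ _ _ hh, al]; ring

lemma mI_lt (n : ℕ) (a b : ℝ) (ha : 0 < a) (hb : 0 < b) (f : ℝ[X]) (hf : f.natDegree < n) :
    mI a b (mJ n a b * f) = 0 := by
  rw [mI_mJ n a b ha hb f hf.le, coeff_eq_zero_of_natDegree_lt hf, zero_mul]

lemma mI_orth (m n : ℕ) (a b : ℝ) (ha : 0 < a) (hb : 0 < b) (h : m ≠ n) :
    mI a b (mJ m a b * mJ n a b) = 0 := by
  rcases lt_or_gt_of_ne h with h | h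
  · rw [mul_comm]; exact mI_lt _ _ _ ha hb _ ((mJ_deg _ _ _).trans_lt h)
  · exact mI_lt _ _ _ ha hb _ ((mJ_deg _ _ _).trans_lt h)

lemma mI_norm (n : ℕ) (a b : ℝ) (ha : 0 < a) (hb : 0 < b) :
    mI a b (mJ n a b * mJ n a b) = hN n a b := by
  rw [mI_mJ n a b ha hb _ (mJ_deg _ _ _), mJ_lead n a b ha hb, one_mul]

lemma opD_zero (a b : ℝ) (ha : 0 < a) (hb : 0 < b) :
    opD a b (mJ 0 a b) = C (al a b 0) * mJ 1 a b := by
  have : a + b + 2 ≠ 0 := by positivity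
  apply Polynomial.funext
  intro x
  simp [mJ, opD, opT, al]
  field_simp
  ring

lemma opD_succ (a b : ℝ) (ha : 0 < a) (hb : 0 < b) (k : ℕ) :
    opD a b (mJ (k + 1) a b) = C (al a b (k + 1)) * mJ (k + 2) a b +
      C (-(al a b k) * hN (k + 1) a b / hN k a b) * mJ k a b := by
  set β := -(al a b k) * hN (k + 1) a b / hN k a b with hβ
  have ha' : -1 < a := by linarith
  have hb' : -1 < b := by linarith
  have hk := (hN_pos k a b ha hb).ne'
  rw [← sub_eq_zero]
  set R := opD a b (mJ (k + 1) a b) - (C (al a b (k + 1)) * mJ (k + 2) a b + C β * mJ k a b) with hR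
  by_contra hne
  have hd2 : R.natDegree ≤ k + 2 := by
    refine (natDegree_sub_le _ _).trans (max_le (opD_deg _ _ _ _ (mJ_deg _ _ _)) ?_)
    refine (natDegree_add_le _ _).trans (max_le ?_ ?_)
    · exact (natDegree_C_mul_le _ _).trans (mJ_deg _ _ _)
    · exact (natDegree_C_mul_le _ _).trans ((mJ_deg _ _ _).trans (by omega))
  have hc : R.coeff (k + 2) = 0 := by
    rw [hR, coeff_sub, coeff_add, opD_lead _ _ _ _ (mJ_deg _ _ _), coeff_C_mul, coeff_C_mul,
      mJ_lead _ _ _ ha hb, mJ_lead _ _ _ ha hb,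
      coeff_eq_zero_of_natDegree_lt ((mJ_deg k a b).trans_lt (by omega : k < k + 2))]
    ring
  have hd : R.natDegree ≤ k + 1 := by
    rcases hd2.lt_or_eq with h | h
    · omega
    · exfalso
      apply hne
      rw [← leadingCoeff_eq_zero, leadingCoeff, h, hc]
  set r := R.natDegree with hr
  have h1 : mI a b (mJ r a b * R) = R.coeff r * hN r a b := mI_mJ r a b ha hb R le_rfl
  have h2 : mI a b (mJ r a b * R) = 0 := by
    have e : mJ r a b * R = opD a b (mJ (k + 1) a b) * mJ r a b -
        (C (al a b (k + 1)) * (mJ (k + 2) a b * mJ r a b) + C β * (mJ k a b * mJ r a b)) := by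
      rw [hR]; ring
    rw [e, mI_sub a b ha' hb', mI_add a b ha' hb', mI_C, mI_C,
      mI_orth (k + 2) r a b ha hb (by omega), mI_skew a b ha' hb']
    rcases (show r = k + 1 ∨ r = k ∨ r + 1 < k + 1 by omega) with h | h | h
    · rw [mI_orth k r a b ha hb (by omega), h]
      have := mI_skew a b ha' hb' (mJ (k + 1) a b) (mJ (k + 1) a b)
      rw [mul_comm] at this
      linarith
    · rw [h, mI_norm k a b ha hb, mI_mJ (k + 1) a b ha hb _ (opD_deg _ _ _ _ (mJ_deg _ _ _)),
        opD_lead _ _ _ _ (mJ_deg _ _ _), mJ_lead k a b ha hb, hβ]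
      field_simp
      ring
    · rw [mI_orth k r a b ha hb (by omega),
        mI_lt (k + 1) a b ha hb _ ((opD_deg _ _ _ _ (mJ_deg _ _ _)).trans_lt h)]
      ring
  rw [h2] at h1
  rcases mul_eq_zero.1 h1.symm with h | h
  · exact hne (leadingCoeff_eq_zero.1 h)
  · exact (hN_pos r a b ha hb).ne' h

/-! Identification with the explicit sums. -/

/-- Coefficients in the explicit formula. -/
noncomputable def cf (a b : ℝ) (n s : ℕ) : ℝ :=
  (Real.Gamma ((n : ℝ) + a + 1) / (Real.Gamma (a + (s : ℝ) + 1) * (Nat.factorial (n - s)))) *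
    (Real.Gamma ((n : ℝ) + b + 1) / (Real.Gamma ((n : ℝ) + b - (s : ℝ) + 1) * (Nat.factorial s)))

/-- The explicit polynomial. -/
noncomputable def pQ (a b : ℝ) (n : ℕ) : ℝ[X] :=
  ∑ s ∈ range (n + 1), C (cf a b n s) * ((C (1 / 2) * (X - 1)) ^ s * (C (1 / 2) * (X + 1)) ^ (n - s))

lemma pQ_eval (a b : ℝ) (n : ℕ) (x : ℝ) : (pQ a b n).eval x = jacobiP a b n x := by
  rw [pQ, jacobiP, eval_finsetSum]
  refine Finset.sum_congr rfl fun s _ => ?_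
  simp only [eval_mul, eval_C, eval_pow, eval_sub, eval_add, eval_X, eval_one, cf]
  rw [show 1 / 2 * (x - 1) = (x - 1) / 2 by ring, show 1 / 2 * (x + 1) = (x + 1) / 2 by ring]
  ring

lemma opT_term (a b : ℝ) (s t : ℕ) (x : ℝ) :
    (opT a b ((C (1 / 2) * (X - 1)) ^ s * (C (1 / 2) * (X + 1)) ^ t)).eval x =
      -2 * ((s + a + 1) * (((x - 1) / 2) ^ s * ((x + 1) / 2) ^ (t + 1)) +
        (t + b + 1) * (((x - 1) / 2) ^ (s + 1) * ((x + 1) / 2) ^ t)) := by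
  have hs : ∀ (n : ℕ) (y : ℝ), (n : ℝ) * y ^ (n - 1) * y = n * y ^ n := by
    intro n y
    cases n with
    | zero => simp
    | succ n => simp [pow_succ]; ring
  have h1 := hs s ((x - 1) / 2)
  have h2 := hs t ((x + 1) / 2)
  simp only [opT, derivative_mul, derivative_pow, derivative_C, derivative_sub, derivative_add,
    derivative_X, derivative_one, eval_mul, eval_C, eval_pow, eval_sub, eval_add, eval_X, eval_one,
    eval_zero]
  rw [show 1 / 2 * (x - 1) = (x - 1) / 2 by ring, show 1 / 2 * (x + 1) = (x + 1) / 2 by ring]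
  linear_combination (-2 * ((x + 1) / 2) ^ (t + 1)) * h1 - 2 * ((x - 1) / 2) ^ (s + 1) * h2

lemma opT_sum (a b : ℝ) (s : Finset ℕ) (f : ℕ → ℝ[X]) :
    opT a b (∑ i ∈ s, f i) = ∑ i ∈ s, opT a b (f i) := by
  induction s using Finset.induction_on with
  | empty => simp [opT]
  | insert i s hi ih => rw [Finset.sum_insert hi, Finset.sum_insert hi, opT_add, ih]

lemma cf1 (a b : ℝ) (ha : 0 < a) (hb : 0 < b) (n s : ℕ) (h : s ≤ n) :
    cf (a + 1) (b + 1) n s * (s + a + 1) = ((n : ℝ) + 1 - s) * cf a b (n + 1) s := by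
  obtain ⟨t, rfl⟩ := Nat.exists_eq_add_of_le h
  unfold cf
  rw [show s + t - s = t by omega, show s + t + 1 - s = t + 1 by omega, Nat.factorial_succ]
  push_cast
  rw [show (s : ℝ) + t + 1 + a + 1 = s + t + (a + 1) + 1 by ring,
    show (s : ℝ) + t + 1 + b + 1 = s + t + (b + 1) + 1 by ring,
    show (s : ℝ) + t + (b + 1) - s + 1 = t + b + 2 by ring,
    show (s : ℝ) + t + 1 + b - s + 1 = t + b + 2 by ring,
    show a + 1 + (s : ℝ) + 1 = (a + s + 1) + 1 by ring,
    Real.Gamma_add_one (s := a + s + 1) (by positivity)]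
  have g1 := Real.Gamma_pos_of_pos (show 0 < a + s + 1 by positivity)
  have g2 := Real.Gamma_pos_of_pos (show 0 < t + b + 2 by positivity)
  have : a + (s : ℝ) + 1 ≠ 0 := by positivity
  have : (t : ℝ) + 1 ≠ 0 := by positivity
  field_simp
  ring

lemma cf2 (a b : ℝ) (ha : 0 < a) (hb : 0 < b) (n s : ℕ) (h : s ≤ n) :
    cf (a + 1) (b + 1) n s * (((n - s : ℕ) : ℝ) + b + 1) = ((s : ℝ) + 1) * cf a b (n + 1) (s + 1) := by
  obtain ⟨t, rfl⟩ := Nat.exists_eq_add_of_le h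
  unfold cf
  rw [show s + t - s = t by omega, show s + t + 1 - (s + 1) = t by omega, Nat.factorial_succ]
  push_cast
  rw [show (s : ℝ) + t + 1 + a + 1 = s + t + (a + 1) + 1 by ring,
    show (s : ℝ) + t + 1 + b + 1 = s + t + (b + 1) + 1 by ring,
    show (s : ℝ) + t + (b + 1) - s + 1 = (t + b + 1) + 1 by ring,
    show (s : ℝ) + t + 1 + b - (s + 1) + 1 = t + b + 1 by ring,
    show a + 1 + (s : ℝ) + 1 = a + s + 2 by ring,
    show a + ((s : ℝ) + 1) + 1 = a + s + 2 by ring,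
    Real.Gamma_add_one (s := t + b + 1) (by positivity)]
  have g1 := Real.Gamma_pos_of_pos (show 0 < a + s + 2 by positivity)
  have g2 := Real.Gamma_pos_of_pos (show 0 < t + b + 1 by positivity)
  have : (t : ℝ) + b + 1 ≠ 0 := by positivity
  have : (s : ℝ) + 1 ≠ 0 := by positivity
  field_simp

lemma pQ_raise (a b : ℝ) (ha : 0 < a) (hb : 0 < b) (n : ℕ) :
    opT a b (pQ (a + 1) (b + 1) n) = C (-2 * ((n : ℝ) + 1)) * pQ a b (n + 1) := by
  apply Polynomial.funext
  intro x
  rw [eval_mul, eval_C, pQ_eval, pQ, opT_sum, eval_finsetSum]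
  set u := (x - 1) / 2 with hu
  set v := (x + 1) / 2 with hv
  have hJ : jacobiP a b (n + 1) x =
      ∑ s ∈ range (n + 2), cf a b (n + 1) s * (u ^ s * v ^ (n + 1 - s)) := by
    rw [jacobiP]
    refine Finset.sum_congr rfl fun s _ => ?_
    simp only [cf]; ring
  have h1 : ((n : ℝ) + 1) * jacobiP a b (n + 1) x =
      ∑ s ∈ range (n + 2), (((n : ℝ) + 1 - s) * cf a b (n + 1) s * (u ^ s * v ^ (n + 1 - s))) +
      ∑ s ∈ range (n + 2), ((s : ℝ) * cf a b (n + 1) s * (u ^ s * v ^ (n + 1 - s))) := by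
    rw [hJ, Finset.mul_sum, ← Finset.sum_add_distrib]
    refine Finset.sum_congr rfl fun s _ => ?_
    ring
  have h2 : ∑ s ∈ range (n + 2), (((n : ℝ) + 1 - s) * cf a b (n + 1) s * (u ^ s * v ^ (n + 1 - s))) =
      ∑ s ∈ range (n + 1), (((n : ℝ) + 1 - s) * cf a b (n + 1) s * (u ^ s * v ^ (n + 1 - s))) := by
    rw [Finset.sum_range_succ]
    push_cast
    ring
  have h3 : ∑ s ∈ range (n + 2), ((s : ℝ) * cf a b (n + 1) s * (u ^ s * v ^ (n + 1 - s))) =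
      ∑ s ∈ range (n + 1), (((s : ℝ) + 1) * cf a b (n + 1) (s + 1) *
        (u ^ (s + 1) * v ^ (n + 1 - (s + 1)))) := by
    rw [Finset.sum_range_succ']
    push_cast
    ring
  rw [mul_assoc, h1, h2, h3, ← Finset.sum_add_distrib, Finset.mul_sum]
  refine Finset.sum_congr rfl fun s hs => ?_
  have hsn : s ≤ n := by have := Finset.mem_range.1 hs; omega
  rw [opT_C, eval_mul, eval_C, opT_term, ← cf1 a b ha hb n s hsn, ← cf2 a b ha hb n s hsn,
    show n + 1 - s = n - s + 1 by omega, show n + 1 - (s + 1) = n - s by omega]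
  ring

lemma mJ_eq (n : ℕ) (a b : ℝ) (ha : 0 < a) (hb : 0 < b) :
    mJ n a b = C (2 ^ n * (Nat.factorial n) * Real.Gamma (a + b + (n : ℝ) + 1) /
      Real.Gamma (a + b + 2 * (n : ℝ) + 1)) * pQ a b n := by
  induction n generalizing a b with
  | zero =>
    have g1 := Real.Gamma_pos_of_pos (show 0 < a + b + 1 by positivity)
    have g2 := Real.Gamma_pos_of_pos (show 0 < a + 1 by positivity)
    have g3 := Real.Gamma_pos_of_pos (show 0 < b + 1 by positivity)
    simp [mJ, pQ, cf, g1.ne', g2.ne', g3.ne']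
  | succ n ih =>
    rw [mJ, ih (a + 1) (b + 1) (by linarith) (by linarith), opT_C, pQ_raise a b ha hb,
      ← mul_assoc, ← mul_assoc, ← C_mul, ← C_mul]
    congr 2
    push_cast [Nat.factorial_succ]
    rw [show a + 1 + (b + 1) + (n : ℝ) + 1 = (a + b + n + 2) + 1 by ring,
      show a + 1 + (b + 1) + 2 * (n : ℝ) + 1 = a + b + 2 * n + 3 by ring,
      show a + b + ((n : ℝ) + 1) + 1 = a + b + n + 2 by ring,
      show a + b + 2 * ((n : ℝ) + 1) + 1 = a + b + 2 * n + 3 by ring,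
      Real.Gamma_add_one (s := a + b + n + 2) (by positivity)]
    have g1 := Real.Gamma_pos_of_pos (show 0 < a + b + 2 * n + 3 by positivity)
    have : (n : ℝ) + a + b + 2 ≠ 0 := by positivity
    field_simp
    ring

lemma jacobiMonic_eq_s9 (n : ℕ) (a b : ℝ) (ha : 0 < a) (hb : 0 < b) :
    jacobiMonic a b n = fun x => (mJ n a b).eval x := by
  ext x
  rw [mJ_eq n a b ha hb, eval_mul, eval_C, pQ_eval, jacobiMonic]

lemma q_even_s9 (m : ℕ) (a b : ℝ) (ha : 0 < a) (hb : 0 < b) :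
    qJOE a b (2 * m) = fun x => (mJ (2 * m) a b).eval x := by
  rw [← jacobiMonic_eq_s9 _ a b ha hb]
  ext x
  rw [qJOE, if_pos (by omega)]

lemma q_odd_s9 (m : ℕ) (a b : ℝ) (ha : 0 < a) (hb : 0 < b) :
    qJOE a b (2 * m + 1) =
      fun x => (C (1 / al a b (2 * m)) * opD a b (mJ (2 * m) a b)).eval x := by
  have hal := al_ne a b ha hb (2 * m)
  ext x
  rw [qJOE, if_neg (by omega), jacobiMonic_eq_s9 _ a b ha hb, jacobiMonic_eq_s9 _ a b ha hb]
  rcases m with _ | m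
  · rw [mul_zero, opD_zero a b ha hb, ← mul_assoc, ← C_mul, one_div_mul_cancel (al_ne a b ha hb 0)]
    simp
  · rw [show 2 * (m + 1) = 2 * m + 1 + 1 by ring] at hal ⊢
    rw [opD_succ a b ha hb (2 * m + 1), show 2 * m + 1 + 1 + 1 - 2 = 2 * m + 1 by omega]
    simp only [eval_mul, eval_add, eval_C]
    rw [mul_add (1 / al a b (2 * m + 1 + 1)),
      ← mul_assoc (1 / al a b (2 * m + 1 + 1)) (al a b (2 * m + 1 + 1)), one_div_mul_cancel hal, one_mul, sub_eq_add_neg, ← neg_mul,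
      ← mul_assoc (1 / al a b (2 * m + 1 + 1))]
    congr 2
    have hk := hN_pos (2 * m + 1) a b ha hb
    rw [hN_ratio _ a b ha hb, ← mul_assoc, mul_div_cancel_right₀ _ hk.ne']
    unfold al
    push_cast
    have h1 : a + b + 2 * (2 * (m : ℝ) + 1) + 1 ≠ 0 := by positivity
    have h2 : a + b + 2 * (2 * (m : ℝ) + 1) + 2 ≠ 0 := by positivity
    have h3 : a + b + 2 * (2 * (m : ℝ) + 1) + 3 ≠ 0 := by positivity
    have h4 : a + b + 2 * (2 * (m : ℝ) + 1) + 4 ≠ 0 := by positivity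
    rw [show 2 * (m : ℝ) + 1 + 1 + 1 - 1 = 2 * m + 2 by ring,
      show a + b + 2 * (2 * (m : ℝ) + 2) - 1 = a + b + 2 * (2 * (m : ℝ) + 1) + 1 by ring,
      show a + b + 2 * (2 * (m : ℝ) + 2) + 1 = a + b + 2 * (2 * (m : ℝ) + 1) + 3 by ring,
      show a + b + 2 * (2 * (m : ℝ) + 2) + 2 = a + b + 2 * (2 * (m : ℝ) + 1) + 4 by ring,
      show a + b + 2 * (2 * (m : ℝ) + 2) = a + b + 2 * (2 * (m : ℝ) + 1) + 2 by ring,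
      show 2 * (m : ℝ) + 1 + 1 + (a + b + 2) / 2 = (a + b + 2 * (2 * (m : ℝ) + 1) + 4) / 2 by ring,
      show 2 * (m : ℝ) + 1 + (a + b + 2) / 2 = (a + b + 2 * (2 * (m : ℝ) + 1) + 2) / 2 by ring]
    field_simp
    ring

lemma skw_even_zero (a b : ℝ) (ha : 0 < a) (hb : 0 < b) (m : ℕ) :
    ∀ n : ℕ, ∃ c : ℝ, skw a b (mJ (2 * m) a b) (mJ (2 * n) a b) =
      c * skw a b (mJ (2 * m) a b) (mJ 0 a b) := by
  intro n
  induction n with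
  | zero => exact ⟨1, by simp⟩
  | succ n ih =>
    obtain ⟨c, hc⟩ := ih
    have h := skw_opD a b ha hb (mJ (2 * m) a b) (mJ (2 * n + 1) a b)
    rw [mI_orth _ _ a b ha hb (by omega), opD_succ a b ha hb, skw_add a b ha hb,
      skw_C a b ha hb, skw_C a b ha hb, hc] at h
    have hal := al_ne a b ha hb (2 * n + 1)
    set β := -al a b (2 * n) * hN (2 * n + 1) a b / hN (2 * n) a b
    refine ⟨-(β * c) / al a b (2 * n + 1), ?_⟩
    rw [show 2 * (n + 1) = 2 * n + 2 by ring]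
    field_simp
    linarith

theorem jacobi_skew_orthogonal_beta1 (a b : ℝ) (ha : 0 < a) (hb : 0 < b) (m n : ℕ) :
    sip1J a b (qJOE a b (2 * m)) (qJOE a b (2 * n)) = 0 ∧
    sip1J a b (qJOE a b (2 * m + 1)) (qJOE a b (2 * n + 1)) = 0 ∧
    (m ≠ n → sip1J a b (qJOE a b (2 * m)) (qJOE a b (2 * n + 1)) = 0) ∧
    sip1J a b (qJOE a b (2 * m)) (qJOE a b (2 * m + 1))
      = 2 ^ (a + b + 4 * (m : ℝ) + 2) * (Nat.factorial (2 * m)) *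
          Real.Gamma (a + 2 * (m : ℝ) + 1) * Real.Gamma (b + 2 * (m : ℝ) + 1) *
          Real.Gamma (a + b + 2 * (m : ℝ) + 1) /
          (Real.Gamma (a + b + 4 * (m : ℝ) + 1) * Real.Gamma (a + b + 4 * (m : ℝ) + 3)) := by
  simp only [q_even_s9 _ a b ha hb, q_odd_s9 _ a b ha hb]
  refine ⟨?_, ?_, ?_, ?_⟩
  · change skw a b _ _ = 0
    have h00 : skw a b (mJ 0 a b) (mJ 0 a b) = 0 := by
      have := skw_swap a b ha hb (mJ 0 a b) (mJ 0 a b)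
      linarith
    obtain ⟨c, hc⟩ := skw_even_zero a b ha hb m n
    obtain ⟨c', hc'⟩ := skw_even_zero a b ha hb 0 m
    rw [mul_zero, h00] at hc'
    rw [hc, skw_swap a b ha hb, hc']
    ring
  · change skw a b _ _ = 0
    rw [skw_C a b ha hb, skw_opD a b ha hb, mul_assoc, mI_C]
    have : mI a b (opD a b (mJ (2 * m) a b) * mJ (2 * n) a b) = 0 := by
      rcases m with _ | m
      · rw [mul_zero, opD_zero a b ha hb, mul_assoc, mI_C, mI_orth _ _ a b ha hb (by omega),
          mul_zero]
      · rw [show 2 * (m + 1) = 2 * m + 1 + 1 by ring, opD_succ a b ha hb, add_mul,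
          mI_add a b (by linarith) (by linarith), mul_assoc, mul_assoc, mI_C, mI_C,
          mI_orth _ _ a b ha hb (by omega), mI_orth _ _ a b ha hb (by omega)]
        ring
    rw [this]; ring
  · intro hmn
    change skw a b _ _ = 0
    rw [skw_C a b ha hb, skw_opD a b ha hb, mI_orth _ _ a b ha hb (by omega)]
    ring
  · change skw a b _ _ = _
    rw [skw_C a b ha hb, skw_opD a b ha hb, mI_norm _ a b ha hb, hN, al]
    push_cast
    have g1 := Real.Gamma_pos_of_pos (show 0 < a + b + 4 * m + 1 by positivity)
    have g2 := Real.Gamma_pos_of_pos (show 0 < a + b + 4 * m + 2 by positivity)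
    have e2 : (2 : ℝ) ^ (a + b + 4 * (m : ℝ) + 2) = 2 ^ (a + b + 4 * (m : ℝ) + 1) * 2 := by
      rw [← Real.rpow_add_one (by norm_num)]; congr 1; ring
    rw [show a + b + 4 * (m : ℝ) + 3 = (a + b + 4 * m + 2) + 1 by ring,
      Real.Gamma_add_one (s := a + b + 4 * m + 2) (by positivity),
      e2,
      show a + b + 2 * (2 * (m : ℝ)) + 1 = a + b + 4 * m + 1 by ring,
      show a + b + 2 * (2 * (m : ℝ)) + 2 = a + b + 4 * m + 2 by ring,
      show 2 * (m : ℝ) + (a + b + 2) / 2 = (a + b + 4 * m + 2) / 2 by ring]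
    have : a + b + 4 * (m : ℝ) + 2 ≠ 0 := by positivity
    generalize (2 : ℝ) ^ (a + b + 4 * (m : ℝ) + 1) = P
    field_simp
end

section
/- Let N ≥ 2 be an even natural number. Define q_{2m}(x) = p_{2m}(x), q_{2m+1}(x) = p_{2m+1}(x) − m·p_{2m−1}(x) (with p_{−1} = 0), r_k = 2^{−2k} √π (2k)!, and Φ_k(x) = (1/2)∫_ℝ sgn(x−t)·q_k(t)·e^{−t²/2} dt, where p_k are the monic Hermite polynomials. Then for all real x, y: Σ_{k=0}^{N/2−1} (e^{−y²/2}/r_k)·(Φ_{2k}(x)·q_{2k+1}(y) − Φ_{2k+1}(x)·q_{2k}(y)) = e^{−(x²+y²)/2} Σ_{l=0}^{N−2} H_l(x)H_l(y)/(√π·2^l·l!) + (2^{N−2}/(√π·(N−2)!))·e^{−y²/2}·p_{N−1}(y)·(1/2)∫_ℝ sgn(x−t)·e^{−t²/2}·p_{N−2}(t) dt. -/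
open MeasureTheory Finset

/-- `q_{2m} = p_{2m}`, `q_{2m+1} = p_{2m+1} − m p_{2m−1}`. -/
noncomputable def qGOE (j : ℕ) (x : ℝ) : ℝ :=
  if j % 2 = 0 then hermiteP j x
  else hermiteP j x - (j / 2 : ℕ) * hermiteP (j - 2) x

/-- The normalizations `r_k = 2^{−2k} √π (2k)!`. -/
noncomputable def rGOE (k : ℕ) : ℝ :=
  Real.sqrt Real.pi * (Nat.factorial (2 * k)) / 2 ^ (2 * k)

/-- `Φ_k(x) = (1/2)∫ sgn(x−t) q_k(t) e^{−t²/2} dt`. -/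
noncomputable def PhiGOE (k : ℕ) (x : ℝ) : ℝ :=
  (1 / 2) * ∫ t : ℝ, Real.sign (x - t) * qGOE k t * Real.exp (-t ^ 2 / 2)

open MeasureTheory Finset Filter Topology

lemma aux_int_pow (m : ℕ) : Integrable (fun t : ℝ => t ^ m * Real.exp (-t ^ 2 / 2)) := by
  have h := integrable_rpow_mul_exp_neg_mul_sq (b := 1 / 2) (by norm_num) (s := (m : ℝ))
    (by have : (0 : ℝ) ≤ m := Nat.cast_nonneg m
        linarith)
  refine h.congr (Eventually.of_forall fun t => ?_)
  simp only [Real.rpow_natCast]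
  congr 2
  ring

lemma aux_int_H (n : ℕ) : ∀ m : ℕ,
    Integrable (fun t : ℝ => t ^ m * hermiteH n t * Real.exp (-t ^ 2 / 2)) := by
  induction n using Nat.strong_induction_on with
  | _ n ih =>
    intro m
    match n, ih with
    | 0, _ => simpa [hermiteH] using aux_int_pow m
    | 1, _ =>
      refine ((aux_int_pow (m + 1)).const_mul 2).congr (Eventually.of_forall fun t => ?_)
      simp only [hermiteH]
      ring
    | (k + 2), ih =>
      refine (((ih (k + 1) (by omega) (m + 1)).const_mul 2).sub
        ((ih k (by omega) m).const_mul (2 * (k + 1)))).congr (Eventually.of_forall fun t => ?_)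
      simp only [hermiteH, Pi.sub_apply]
      ring

/-- The weighted monic Hermite functions. -/
noncomputable def gP (k : ℕ) (t : ℝ) : ℝ := hermiteP k t * Real.exp (-t ^ 2 / 2)

lemma gP_int (k : ℕ) : Integrable (gP k) := by
  refine ((aux_int_H k 0).const_mul (1 / 2 ^ k)).congr (Eventually.of_forall fun t => ?_)
  simp only [gP, hermiteP]
  ring

lemma hermiteP_rec (n : ℕ) (x : ℝ) :
    hermiteP (n + 2) x = x * hermiteP (n + 1) x - (n + 1) / 2 * hermiteP n x := by
  simp only [hermiteP, hermiteH]
  field_simp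
  ring

lemma hermiteP_zero (x : ℝ) : hermiteP 0 x = 1 := by simp [hermiteP, hermiteH]

lemma hermiteP_one (x : ℝ) : hermiteP 1 x = x := by simp [hermiteP, hermiteH]

lemma hermiteP_deriv (n : ℕ) (x : ℝ) :
    HasDerivAt (hermiteP (n + 1)) ((n + 1) * hermiteP n x) x := by
  induction n using Nat.strong_induction_on with
  | _ n ih =>
    match n, ih with
    | 0, _ =>
      have : hermiteP (0 + 1) = fun x => x := by ext x; simp [hermiteP_one]
      rw [this]
      simpa [hermiteP_zero] using hasDerivAt_id' x
    | 1, _ =>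
      have : hermiteP (1 + 1) = fun x => x * x - 1 / 2 := by
        ext x
        rw [hermiteP_rec 0 x]
        simp [hermiteP_zero, hermiteP_one]
      rw [this]
      refine (((hasDerivAt_id' x).mul (hasDerivAt_id' x)).sub_const (1 / 2)).congr_deriv ?_
      simp only [hermiteP_one]
      push_cast
      ring
    | (k + 2), ih =>
      have h1 := ih (k + 1) (by omega)
      have h0 := ih k (by omega)
      have : hermiteP (k + 2 + 1) =
          fun x => x * hermiteP (k + 1 + 1) x - ((k + 1 : ℕ) + 1) / 2 * hermiteP (k + 1) x := by
        ext x
        exact hermiteP_rec (k + 1) x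
      rw [this]
      refine (((hasDerivAt_id' x).mul h1).sub (h0.const_mul _)).congr_deriv ?_
      have e : hermiteP (k + 1 + 1) x = _ := hermiteP_rec k x
      rw [e]
      push_cast
      ring

lemma gauss_deriv (x : ℝ) :
    HasDerivAt (fun t : ℝ => Real.exp (-t ^ 2 / 2)) (-x * Real.exp (-x ^ 2 / 2)) x := by
  have h : HasDerivAt (fun t : ℝ => -t ^ 2 / 2) (-x) x := by
    refine (((hasDerivAt_pow 2 x).neg).div_const 2).congr_deriv ?_
    norm_num
    ring
  exact h.exp.congr_deriv (by ring)

lemma gP_deriv_zero (x : ℝ) : HasDerivAt (gP 0) (-gP 1 x) x := by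
  have : gP 0 = fun t : ℝ => Real.exp (-t ^ 2 / 2) := by
    ext t; simp [gP, hermiteP_zero]
  rw [this]
  refine (gauss_deriv x).congr_deriv ?_
  simp only [gP, hermiteP_one]
  ring

lemma gP_deriv_succ (n : ℕ) (x : ℝ) :
    HasDerivAt (gP (n + 1)) ((n + 1) / 2 * gP n x - gP (n + 2) x) x := by
  refine ((hermiteP_deriv n x).mul (gauss_deriv x)).congr_deriv ?_
  simp only [gP, hermiteP_rec]
  ring

/-- Sign transform. -/
noncomputable def sT (f : ℝ → ℝ) (x : ℝ) : ℝ := ∫ t : ℝ, Real.sign (x - t) * f t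

lemma sT_eq {f : ℝ → ℝ} (hf : Integrable f) (x : ℝ) :
    sT f x = (∫ t in Set.Iic x, f t) - ∫ t in Set.Ioi x, f t := by
  rw [← integral_indicator measurableSet_Iic, ← integral_indicator measurableSet_Ioi,
    ← integral_sub (hf.indicator measurableSet_Iic) (hf.indicator measurableSet_Ioi)]
  refine integral_congr_ae ?_
  have : ∀ᵐ t : ℝ, t ≠ x := by simp [ae_iff]
  filter_upwards [this] with t ht
  rcases lt_or_gt_of_ne ht with h | h
  · simp [Set.indicator, h.le, not_lt.2 h.le, Real.sign_of_pos (sub_pos.2 h)]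
  · simp [Set.indicator, h, not_le.2 h, Real.sign_of_neg (sub_neg.2 h)]

lemma sT_deriv {f f' : ℝ → ℝ} (hf : Integrable f) (hf' : Integrable f')
    (hd : ∀ x, HasDerivAt f (f' x) x) (x : ℝ) : sT f' x = 2 * f x := by
  have ht := tendsto_zero_of_hasDerivAt_of_integrableOn_Ioi (a := x) (fun y _ => hd y)
    hf'.integrableOn hf.integrableOn
  have hb := tendsto_zero_of_hasDerivAt_of_integrableOn_Iic (a := x) (fun y _ => hd y)
    hf'.integrableOn hf.integrableOn
  rw [sT_eq hf', integral_Iic_of_hasDerivAt_of_tendsto' (fun y _ => hd y) hf'.integrableOn hb,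
    integral_Ioi_of_hasDerivAt_of_tendsto' (fun y _ => hd y) hf'.integrableOn ht]
  ring

lemma sT_comb {f g : ℝ → ℝ} (hf : Integrable f) (hg : Integrable g) (c : ℝ) (x : ℝ) :
    sT (fun t => c * f t - g t) x = c * sT f x - sT g x := by
  have h : Integrable (fun t => c * f t - g t) := (hf.const_mul c).sub hg
  rw [sT_eq hf, sT_eq hg, sT_eq h,
    integral_sub (hf.const_mul c).integrableOn hg.integrableOn,
    integral_sub (hf.const_mul c).integrableOn hg.integrableOn,
    integral_const_mul, integral_const_mul]
  ring

lemma sT_rec (n : ℕ) (x : ℝ) :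
    sT (gP (n + 2)) x = (n + 1) / 2 * sT (gP n) x - 2 * gP (n + 1) x := by
  have h := sT_deriv (gP_int (n + 1)) (((gP_int n).const_mul ((n + 1) / 2)).sub (gP_int (n + 2)))
    (gP_deriv_succ n) x
  have h2 := sT_comb (gP_int n) (gP_int (n + 2)) ((n + 1) / 2) x
  have h3 : sT (fun t => ((n : ℝ) + 1) / 2 * gP n t - gP (n + 2) t) x = 2 * gP (n + 1) x := h
  linarith

lemma Phi_even (k : ℕ) (x : ℝ) : PhiGOE (2 * k) x = 1 / 2 * sT (gP (2 * k)) x := by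
  simp [PhiGOE, sT, gP, qGOE, mul_assoc]

lemma qGOE_even (k : ℕ) (x : ℝ) : qGOE (2 * k) x = hermiteP (2 * k) x := by simp [qGOE]

lemma qGOE_one (x : ℝ) : qGOE 1 x = hermiteP 1 x := by simp [qGOE]

lemma qGOE_odd (k : ℕ) (x : ℝ) : qGOE (2 * (k + 1) + 1) x =
    hermiteP (2 * k + 3) x - (k + 1) * hermiteP (2 * k + 1) x := by
  have h1 : (2 * (k + 1) + 1) % 2 ≠ 0 := by omega
  have h2 : (2 * (k + 1) + 1) / 2 = k + 1 := by omega
  have h3 : 2 * (k + 1) + 1 - 2 = 2 * k + 1 := by omega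
  rw [qGOE, if_neg h1, h2, h3]
  push_cast
  rfl

lemma Phi_odd (k : ℕ) (x : ℝ) : PhiGOE (2 * k + 1) x = -gP (2 * k) x := by
  cases k with
  | zero =>
    have h := sT_deriv (gP_int 0) (gP_int 1).neg gP_deriv_zero x
    have e : PhiGOE (2 * 0 + 1) x = 1 / 2 * -sT (-gP 1) x := by
      simp only [PhiGOE, sT, ← integral_neg]
      congr 2
      ext t
      simp [qGOE_one, gP, mul_assoc]
    rw [e, h]
    ring
  | succ k =>
    have h := sT_deriv (gP_int (2 * k + 2))
      (((gP_int (2 * k + 1)).const_mul (((2 * k + 1 : ℕ) + 1) / 2)).sub (gP_int (2 * k + 3)))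
      (gP_deriv_succ (2 * k + 1)) x
    have e : PhiGOE (2 * (k + 1) + 1) x = 1 / 2 * -(2 * gP (2 * k + 2) x) := by
      rw [← h]
      simp only [PhiGOE, sT, ← integral_neg]
      congr 2
      ext t
      simp only [qGOE_odd, gP, Pi.sub_apply]
      push_cast
      ring
    rw [e, mul_add]
    ring

lemma aux_main (M : ℕ) (x y : ℝ) :
    ∑ k ∈ range (M + 1), (Real.exp (-y ^ 2 / 2) / rGOE k) *
        (PhiGOE (2 * k) x * qGOE (2 * k + 1) y - PhiGOE (2 * k + 1) x * qGOE (2 * k) y)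
      = Real.exp (-x ^ 2 / 2) * Real.exp (-y ^ 2 / 2) *
          ∑ l ∈ range (2 * M + 1),
            hermiteH l x * hermiteH l y / (Real.sqrt Real.pi * 2 ^ l * (Nat.factorial l))
        + (2 ^ (2 * M) / (Real.sqrt Real.pi * (Nat.factorial (2 * M)))) *
            Real.exp (-y ^ 2 / 2) * hermiteP (2 * M + 1) y * (1 / 2 * sT (gP (2 * M)) x) := by
  have hpi : Real.sqrt Real.pi ≠ 0 := by positivity
  induction M with
  | zero =>
    have := Phi_even 0 x
    have h1 := Phi_odd 0 x
    simp only [mul_zero, zero_add] at this h1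
    simp [this, h1, qGOE_one, rGOE, gP, hermiteP_zero, qGOE, hermiteH]
    field_simp
    ring
  | succ M ih =>
    rw [Finset.sum_range_succ, ih, Phi_even, Phi_odd, qGOE_odd, qGOE_even,
      show 2 * (M + 1) + 1 = 2 * M + 1 + 1 + 1 by ring, Finset.sum_range_succ _ (2 * M + 1 + 1),
      Finset.sum_range_succ _ (2 * M + 1), show 2 * (M + 1) = 2 * M + 2 by ring, sT_rec (2 * M)]
    have hH : ∀ l z, hermiteH l z = 2 ^ l * hermiteP l z := by
      intro l z
      simp only [hermiteP]
      field_simp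
    have hf : ((2 * M).factorial : ℝ) ≠ 0 := by positivity
    simp only [rGOE, gP, hH, show 2 * (M + 1) = 2 * M + 1 + 1 by ring,
      Nat.factorial_succ, show 2 * M + 2 = 2 * M + 1 + 1 by ring]
    generalize (∑ l ∈ range (2 * M + 1), _ : ℝ) = S
    have h1 : (2 * (M : ℝ) + 1) ≠ 0 := by positivity
    have h2 : ((M : ℝ) + 1) ≠ 0 := by positivity
    have h3 : (2 * (M : ℝ) + 1 + 1) = 2 * (M + 1) := by ring
    push_cast
    rw [h3]
    field_simp
    ring

/-- Closed-form summation of the GOE kernel `S₁(x,y)` for `N` even. -/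
theorem goe_kernel_summation (N : ℕ) (hN : 2 ≤ N) (hNeven : Even N) (x y : ℝ) :
    ∑ k ∈ range (N / 2), (Real.exp (-y ^ 2 / 2) / rGOE k) *
        (PhiGOE (2 * k) x * qGOE (2 * k + 1) y - PhiGOE (2 * k + 1) x * qGOE (2 * k) y)
      = Real.exp (-(x ^ 2 + y ^ 2) / 2) *
          ∑ l ∈ range (N - 1),
            hermiteH l x * hermiteH l y / (Real.sqrt Real.pi * 2 ^ l * (Nat.factorial l))
        + (2 ^ (N - 2) / (Real.sqrt Real.pi * (Nat.factorial (N - 2)))) *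
            Real.exp (-y ^ 2 / 2) * hermiteP (N - 1) y *
            ((1 / 2) * ∫ t : ℝ, Real.sign (x - t) * Real.exp (-t ^ 2 / 2) * hermiteP (N - 2) t) := by
  obtain ⟨m, hm⟩ := hNeven
  obtain ⟨M, rfl⟩ : ∃ M, m = M + 1 := ⟨m - 1, by omega⟩
  subst hm
  have h := aux_main M x y
  rw [show (M + 1 + (M + 1)) / 2 = M + 1 by omega, show M + 1 + (M + 1) - 1 = 2 * M + 1 by omega,
    show M + 1 + (M + 1) - 2 = 2 * M by omega, h, ← Real.exp_add]
  have e : -x ^ 2 / 2 + -y ^ 2 / 2 = -(x ^ 2 + y ^ 2) / 2 := by ring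
  rw [e]
  congr 3
  simp only [sT, gP]
  congr 1
  ext t
  ring
end

section
/- Let a > −1 be real and let N ≥ 1 be a natural number. Define q̃_{2m+1}(x) = p_{2m+1}(x), q̃_{2m}(x) = 2^{2m} m! Γ(a/2+m+1) Σ_{j=0}^{m} p_{2j}(x)/(2^{2j} j! Γ(a/2+j+1)), and r̃_m = (1/2)·(2m+1)!·Γ(a+2m+2), where p_k are the monic Laguerre polynomials with parameter a. Define S̃₄(x,y) = Σ_{m=0}^{N−1} (x^{(a+1)/2} e^{−x/2}/(2r̃_m))·(q̃_{2m}(x)·(d/dy)[y^{(a+1)/2} e^{−y/2} q̃_{2m+1}(y)] − q̃_{2m+1}(x)·(d/dy)[y^{(a+1)/2} e^{−y/2} q̃_{2m}(y)]). Then for all x, y > 0: S̃₄(x,y) = (1/2)·x^{(a+1)/2} y^{(a−1)/2} e^{−(x+y)/2} Σ_{l=0}^{2N−1} p_l(x)p_l(y)/(l!·Γ(a+l+1)) − (1/(4·(2N−1)!·Γ(a+2N)))·y^{(a−1)/2} e^{−y/2}·p_{2N}(y)·∫_x^{∞} t^{(a−1)/2} e^{−t/2}·p_{2N−1}(t) dt.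 -/
open MeasureTheory Finset

/-- The normalizations `r̃_m = (1/2)(2m+1)! Γ(a+2m+2)`. -/
noncomputable def rLSE (a : ℝ) (m : ℕ) : ℝ :=
  (1 / 2) * (Nat.factorial (2 * m + 1)) * Real.Gamma (a + 2 * (m : ℝ) + 2)

/-- The Laguerre symplectic ensemble kernel `S̃₄(x,y)`. -/
noncomputable def S4LSE (a : ℝ) (N : ℕ) (x y : ℝ) : ℝ :=
  ∑ m ∈ range N, ((x ^ ((a + 1) / 2) * Real.exp (-x / 2)) / (2 * rLSE a m)) *
    (qLSE a (2 * m) x *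
        deriv (fun t => t ^ ((a + 1) / 2) * Real.exp (-t / 2) * qLSE a (2 * m + 1) t) y -
     qLSE a (2 * m + 1) x *
        deriv (fun t => t ^ ((a + 1) / 2) * Real.exp (-t / 2) * qLSE a (2 * m) t) y)


noncomputable def lagC (a : ℝ) (k j : ℕ) : ℝ :=
  (-1) ^ (k + j) * (Nat.choose k j) * (Real.Gamma ((k : ℝ) + a + 1) / Real.Gamma ((j : ℝ) + a + 1))

noncomputable def lagPoly (a : ℝ) (k : ℕ) : Polynomial ℝ :=
  ∑ j ∈ range (k + 1), Polynomial.C (lagC a k j) * Polynomial.X ^ j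

lemma lagPoly_coeff (a : ℝ) (k j : ℕ) : (lagPoly a k).coeff j = lagC a k j := by
  unfold lagPoly
  simp only [Polynomial.finsetSum_coeff, Polynomial.coeff_C_mul, Polynomial.coeff_X_pow,
    mul_ite, mul_one, mul_zero]
  rw [Finset.sum_ite_eq]
  split_ifs with h
  · rfl
  · have : k < j := by simpa using h
    simp [lagC, Nat.choose_eq_zero_of_lt this]

lemma lagP_eq (a : ℝ) (k : ℕ) (x : ℝ) : laguerreP a k x = (lagPoly a k).eval x := by
  unfold laguerreP laguerreL lagPoly
  rw [Polynomial.eval_finsetSum, Finset.mul_sum]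
  refine Finset.sum_congr rfl fun j hj => ?_
  have hj' : j ≤ k := by simpa [Nat.lt_succ_iff] using hj
  simp only [Polynomial.eval_mul, Polynomial.eval_C, Polynomial.eval_pow, Polynomial.eval_X, lagC]
  rw [Nat.cast_choose ℝ hj', pow_add]
  have h1 : (j.factorial : ℝ) ≠ 0 := by positivity
  have h2 : ((k - j).factorial : ℝ) ≠ 0 := by positivity
  field_simp

lemma gpos {a : ℝ} (ha : -1 < a) (k : ℕ) : Real.Gamma ((k : ℝ) + a + 1) ≠ 0 := by
  have : (0 : ℝ) ≤ k := Nat.cast_nonneg k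
  exact (Real.Gamma_pos_of_pos (by linarith)).ne'

lemma gsucc {a : ℝ} (ha : -1 < a) (k : ℕ) :
    Real.Gamma (((k + 1 : ℕ) : ℝ) + a + 1) = ((k : ℝ) + a + 1) * Real.Gamma ((k : ℝ) + a + 1) := by
  have : (0 : ℝ) ≤ k := Nat.cast_nonneg k
  rw [← Real.Gamma_add_one (by linarith : (k : ℝ) + a + 1 ≠ 0)]
  congr 1; push_cast; ring

lemma lagPoly_id {a : ℝ} (ha : -1 < a) (k : ℕ) :
    Polynomial.X * Polynomial.derivative (lagPoly a k)
      - Polynomial.C (1 / 2) * (Polynomial.X * lagPoly a k)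
      + Polynomial.C ((a + 1) / 2) * lagPoly a k
    = Polynomial.C (1 / 2 * (k * (k + a))) * lagPoly a (k - 1)
      - Polynomial.C (1 / 2) * lagPoly a (k + 1) := by
  ext j
  have hg : (k : ℝ) * (k + a) * lagC a (k - 1) j =
      - ((-1) ^ (k + j) * ((k : ℝ) - j) * (Nat.choose k j) *
        (Real.Gamma ((k : ℝ) + a + 1) / Real.Gamma ((j : ℝ) + a + 1))) := by
    rcases k with _ | k
    · rcases j with _ | j <;> simp
    · have e : ((k : ℝ) + 1) * (k.choose j) = ((k : ℝ) + 1 - j) * ((k + 1).choose j) := by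
        rcases le_or_gt j (k + 1) with h | h
        · have := Nat.add_one_mul_choose_eq k j
          have h2 := Nat.choose_mul_succ_eq k j
          have h3 : ((k.choose j * (k + 1) : ℕ) : ℝ) = (((k + 1).choose j * (k + 1 - j) : ℕ) : ℝ) := by
            exact_mod_cast h2
          push_cast [Nat.cast_sub h] at h3
          linarith
        · rw [Nat.choose_eq_zero_of_lt h, Nat.choose_eq_zero_of_lt (by omega)]; simp
      rw [gsucc ha]
      unfold lagC
      have := gpos ha j
      push_cast
      have e2 : ((-1 : ℝ)) ^ (k + 1 + j) = - (-1) ^ (k + j) := by ring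
      rw [e2]
      linear_combination ((k : ℝ) + 1 + a) * (-1) ^ (k + j) * (Real.Gamma ((k : ℝ) + a + 1) / Real.Gamma ((j : ℝ) + a + 1)) * e
  rcases j with _ | j
  · simp only [Polynomial.coeff_add, Polynomial.coeff_sub, Polynomial.coeff_C_mul,
      Polynomial.coeff_X_mul_zero, lagPoly_coeff]
    rw [mul_assoc (1 / 2), hg]
    unfold lagC
    rw [gsucc ha]
    simp [pow_succ]
    ring
  · simp only [Polynomial.coeff_add, Polynomial.coeff_sub, Polynomial.coeff_C_mul,
      Polynomial.coeff_X_mul, Polynomial.coeff_derivative, lagPoly_coeff]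
    rw [mul_assoc (1 / 2), hg]
    unfold lagC
    rw [gsucc ha, gsucc ha]
    have e : ((k : ℝ) - j) * (k.choose j) = (j + 1) * (k.choose (j + 1)) := by
      rcases le_or_gt j k with h | h
      · have h2 := Nat.choose_succ_right_eq k j
        have h3 : ((k.choose (j + 1) * (j + 1) : ℕ) : ℝ) = ((k.choose j * (k - j) : ℕ) : ℝ) := by
          exact_mod_cast h2
        push_cast [Nat.cast_sub h] at h3
        linarith
      · rw [Nat.choose_eq_zero_of_lt h, Nat.choose_eq_zero_of_lt (by omega)]; simp
    have hj := gpos ha j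
    have hj0 : (j : ℝ) + a + 1 ≠ 0 := by
      have : (0 : ℝ) ≤ j := Nat.cast_nonneg j
      linarith
    rw [Nat.choose_succ_succ]
    push_cast
    have e1 : ((-1 : ℝ)) ^ (k + (j + 1)) = - (-1) ^ (k + j) := by ring
    have e2 : ((-1 : ℝ)) ^ (k + 1 + (j + 1)) = (-1) ^ (k + j) := by ring
    rw [e1, e2]
    field_simp
    linear_combination Real.Gamma ((k : ℝ) + a + 1) * e

lemma hasDeriv_w {a : ℝ} (ha : -1 < a) (k : ℕ) {y : ℝ} (hy : 0 < y) :
    HasDerivAt (fun t => t ^ ((a + 1) / 2) * Real.exp (-t / 2) * laguerreP a k t)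
      (1 / 2 * (y ^ ((a - 1) / 2) * Real.exp (-y / 2)) *
        (k * (k + a) * laguerreP a (k - 1) y - laguerreP a (k + 1) y)) y := by
  simp only [lagP_eq]
  have h1 : HasDerivAt (fun t : ℝ => t ^ ((a + 1) / 2)) ((a + 1) / 2 * y ^ ((a + 1) / 2 - 1)) y :=
    Real.hasDerivAt_rpow_const (Or.inl hy.ne')
  have h2 : HasDerivAt (fun t : ℝ => Real.exp (-t / 2)) (Real.exp (-y / 2) * (-1 / 2)) y :=
    ((hasDerivAt_id y).neg.div_const 2).exp
  have h3 := (lagPoly a k).hasDerivAt y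
  have h := (h1.mul h2).mul h3
  refine h.congr_deriv ?_
  have hid := congrArg (Polynomial.eval y) (lagPoly_id ha k)
  simp only [Polynomial.eval_add, Polynomial.eval_sub, Polynomial.eval_mul, Polynomial.eval_C,
    Polynomial.eval_X] at hid
  have e1 : y ^ ((a + 1) / 2) = y ^ ((a - 1) / 2) * y := by
    rw [← Real.rpow_add_one hy.ne']; congr 1; ring
  have e2 : (a + 1) / 2 - 1 = (a - 1) / 2 := by ring
  simp only [Pi.mul_apply]
  rw [e2, e1]
  linear_combination y ^ ((a - 1) / 2) * Real.exp (-y / 2) * hid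

lemma q_odd_s14 (a : ℝ) (m : ℕ) (x : ℝ) : qLSE a (2 * m + 1) x = laguerreP a (2 * m + 1) x := by
  unfold qLSE
  rw [if_pos (by omega)]

lemma q_zero {a : ℝ} (ha : -1 < a) (x : ℝ) : qLSE a (2 * 0) x = laguerreP a 0 x := by
  have : Real.Gamma (a / 2 + 1) ≠ 0 := (Real.Gamma_pos_of_pos (by linarith)).ne'
  simp only [qLSE]
  simp
  rw [mul_div_assoc', mul_div_cancel_left₀ _ this]

lemma q_succ {a : ℝ} (ha : -1 < a) (m : ℕ) (x : ℝ) : qLSE a (2 * (m + 1)) x =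
    laguerreP a (2 * m + 2) x + (2 * m + 2) * (2 * m + 2 + a) * qLSE a (2 * m) x := by
  unfold qLSE
  rw [if_neg (by omega), if_neg (by omega)]
  have d1 : 2 * (m + 1) / 2 = m + 1 := by omega
  have d2 : 2 * m / 2 = m := by omega
  rw [d1, d2, Finset.sum_range_succ _ (m + 1)]
  have hm : (0 : ℝ) ≤ m := Nat.cast_nonneg m
  have g : Real.Gamma (a / 2 + ((m + 1 : ℕ) : ℝ) + 1) =
      (a / 2 + m + 1) * Real.Gamma (a / 2 + m + 1) := by
    rw [← Real.Gamma_add_one (by linarith)]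
    congr 1; push_cast; ring
  have gp : Real.Gamma (a / 2 + m + 1) ≠ 0 := (Real.Gamma_pos_of_pos (by linarith)).ne'
  have h0 : a / 2 + m + 1 ≠ 0 := by linarith
  have hf : ((m + 1).factorial : ℝ) = (m + 1) * m.factorial := by
    rw [Nat.factorial_succ]; push_cast; ring
  have hfp : (m.factorial : ℝ) ≠ 0 := by positivity
  have hm1 : (m : ℝ) + 1 ≠ 0 := by positivity
  rw [g, hf, show 2 * (m + 1) = 2 * m + 2 by ring]
  generalize ∑ i ∈ range (m + 1), laguerreP a (2 * i) x /
        (2 ^ (2 * i) * (Nat.factorial i) * Real.Gamma (a / 2 + (i : ℝ) + 1)) = S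
  rw [mul_add, add_comm]
  congr 1
  · rw [mul_div_assoc', mul_div_cancel_left₀]
    positivity
  · rw [pow_add]; ring

lemma hasDeriv_q {a : ℝ} (ha : -1 < a) (m : ℕ) {y : ℝ} (hy : 0 < y) :
    HasDerivAt (fun t => t ^ ((a + 1) / 2) * Real.exp (-t / 2) * qLSE a (2 * m) t)
      (-(1 / 2) * (y ^ ((a - 1) / 2) * Real.exp (-y / 2)) * laguerreP a (2 * m + 1) y) y := by
  induction m with
  | zero =>
    simp only [q_zero ha]
    refine (hasDeriv_w ha 0 hy).congr_deriv ?_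
    simp
  | succ m ih =>
    simp only [q_succ ha]
    have h := (hasDeriv_w ha (2 * m + 2) hy).add
      (ih.const_mul (((2 : ℝ) * m + 2) * (2 * m + 2 + a)))
    have h' := h.congr_deriv (g' := -(1 / 2) * (y ^ ((a - 1) / 2) * Real.exp (-y / 2)) *
      laguerreP a (2 * (m + 1) + 1) y) (by
        rw [show 2 * m + 2 - 1 = 2 * m + 1 by omega, show 2 * (m + 1) + 1 = 2 * m + 2 + 1 by ring]
        push_cast; ring)
    refine h'.congr_of_eventuallyEq (Filter.Eventually.of_forall fun t => ?_)
    simp only [Pi.add_apply]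
    ring

lemma poly_integrable {s : ℝ} (hs : -1 < s) (P : Polynomial ℝ) :
    IntegrableOn (fun t => t ^ s * Real.exp (-t / 2) * P.eval t) (Set.Ioi 0) := by
  induction P using Polynomial.induction_on' with
  | add p q hp hq =>
    refine (hp.add hq).congr_fun (fun t _ => ?_) measurableSet_Ioi
    simp [mul_add]
  | monomial n c =>
    have hn : (0 : ℝ) ≤ n := Nat.cast_nonneg n
    have h := (integrableOn_rpow_mul_exp_neg_mul_rpow (s := s + n) (p := 1) (b := 1 / 2)
      (by linarith) one_pos (by norm_num)).mul_const c
    refine IntegrableOn.congr_fun h (fun t ht => ?_) measurableSet_Ioi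
    have ht' : (0 : ℝ) < t := ht
    simp only [Polynomial.eval_monomial]
    rw [Real.rpow_add ht', Real.rpow_natCast, Real.rpow_one,
      show -(1 / 2) * t = -t / 2 by ring]
    ring

lemma poly_tendsto (s : ℝ) (P : Polynomial ℝ) :
    Filter.Tendsto (fun t => t ^ s * Real.exp (-t / 2) * P.eval t) Filter.atTop (nhds 0) := by
  induction P using Polynomial.induction_on' with
  | add p q hp hq =>
    have := hp.add hq
    simpa [mul_add] using this
  | monomial n c =>
    have h := (tendsto_rpow_mul_exp_neg_mul_atTop_nhds_zero (s + n) (1 / 2)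
      (by norm_num)).mul_const c
    rw [zero_mul] at h
    refine h.congr' ?_
    filter_upwards [Filter.eventually_gt_atTop 0] with t ht
    simp only [Polynomial.eval_monomial]
    rw [Real.rpow_add ht, Real.rpow_natCast, show -(1 / 2) * t = -t / 2 by ring]
    ring

lemma q_tendsto {a : ℝ} (ha : -1 < a) (m : ℕ) :
    Filter.Tendsto (fun t => t ^ ((a + 1) / 2) * Real.exp (-t / 2) * qLSE a (2 * m) t)
      Filter.atTop (nhds 0) := by
  induction m with
  | zero => simp only [q_zero ha, lagP_eq]; exact poly_tendsto _ _
  | succ m ih =>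
    simp only [q_succ ha, lagP_eq]
    have h := (poly_tendsto ((a + 1) / 2) (lagPoly a (2 * m + 2))).add
      (ih.const_mul (((2 : ℝ) * m + 2) * (2 * m + 2 + a)))
    rw [mul_zero, add_zero] at h
    refine h.congr fun t => ?_
    ring

lemma q_integral {a : ℝ} (ha : -1 < a) (m : ℕ) {x : ℝ} (hx : 0 < x) :
    ∫ t in Set.Ioi x, t ^ ((a - 1) / 2) * Real.exp (-t / 2) * laguerreP a (2 * m + 1) t
      = 2 * (x ^ ((a + 1) / 2) * Real.exp (-x / 2) * qLSE a (2 * m) x) := by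
  have hint : IntegrableOn (fun t => -(1 / 2) * (t ^ ((a - 1) / 2) * Real.exp (-t / 2)) *
      laguerreP a (2 * m + 1) t) (Set.Ioi x) := by
    have h := ((poly_integrable (s := (a - 1) / 2) (by linarith)
      (lagPoly a (2 * m + 1))).mono_set (Set.Ioi_subset_Ioi hx.le)).const_mul (-(1 / 2))
    refine IntegrableOn.congr_fun h (fun t _ => ?_) measurableSet_Ioi
    simp only [lagP_eq]; ring
  have h := integral_Ioi_of_hasDerivAt_of_tendsto' (a := x)
    (fun t (ht : t ∈ Set.Ici x) => hasDeriv_q ha m (lt_of_lt_of_le hx ht)) hint (q_tendsto ha m)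
  simp only [mul_assoc] at h ⊢
  rw [integral_const_mul] at h
  linarith

lemma S4_sum {a : ℝ} (ha : -1 < a) (N : ℕ) {x y : ℝ} (hy : 0 < y) :
    S4LSE a (N + 1) x y = (1 / 2) * (x ^ ((a + 1) / 2) * Real.exp (-x / 2)) *
      (y ^ ((a - 1) / 2) * Real.exp (-y / 2)) *
      (∑ l ∈ range (2 * (N + 1)), laguerreP a l x * laguerreP a l y /
              ((Nat.factorial l) * Real.Gamma (a + (l : ℝ) + 1))
        - qLSE a (2 * N) x * laguerreP a (2 * N + 2) y /
          ((Nat.factorial (2 * N + 1)) * Real.Gamma (a + 2 * (N : ℝ) + 2))) := by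
  have key : ∀ m : ℕ, ((x ^ ((a + 1) / 2) * Real.exp (-x / 2)) / (2 * rLSE a m)) *
    (qLSE a (2 * m) x *
        deriv (fun t => t ^ ((a + 1) / 2) * Real.exp (-t / 2) * qLSE a (2 * m + 1) t) y -
     qLSE a (2 * m + 1) x *
        deriv (fun t => t ^ ((a + 1) / 2) * Real.exp (-t / 2) * qLSE a (2 * m) t) y)
     = (1 / 2) * (x ^ ((a + 1) / 2) * Real.exp (-x / 2)) *
      (y ^ ((a - 1) / 2) * Real.exp (-y / 2)) *
      (qLSE a (2 * m) x * laguerreP a (2 * m) y /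
          ((Nat.factorial (2 * m)) * Real.Gamma (a + 2 * (m : ℝ) + 1))
        - qLSE a (2 * m) x * laguerreP a (2 * m + 2) y /
          ((Nat.factorial (2 * m + 1)) * Real.Gamma (a + 2 * (m : ℝ) + 2))
        + laguerreP a (2 * m + 1) x * laguerreP a (2 * m + 1) y /
          ((Nat.factorial (2 * m + 1)) * Real.Gamma (a + 2 * (m : ℝ) + 2))) := by
    intro m
    rw [(hasDeriv_q ha m hy).deriv]
    simp only [q_odd_s14]
    rw [(hasDeriv_w ha (2 * m + 1) hy).deriv]
    have hm : (0 : ℝ) ≤ m := Nat.cast_nonneg m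
    have g : Real.Gamma (a + 2 * (m : ℝ) + 2) =
        (a + 2 * m + 1) * Real.Gamma (a + 2 * (m : ℝ) + 1) := by
      rw [← Real.Gamma_add_one (by linarith)]
      congr 1; ring
    have gp : Real.Gamma (a + 2 * (m : ℝ) + 1) ≠ 0 := (Real.Gamma_pos_of_pos (by linarith)).ne'
    have h0 : a + 2 * (m : ℝ) + 1 ≠ 0 := by linarith
    have h1 : 2 * (m : ℝ) + 1 ≠ 0 := by linarith
    have hfp : ((2 * m).factorial : ℝ) ≠ 0 := by positivity
    have hf : ((2 * m + 1).factorial : ℝ) = (2 * m + 1) * (2 * m).factorial := by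
      rw [Nat.factorial_succ]; push_cast; ring
    unfold rLSE
    rw [g, hf]
    simp only [Nat.add_sub_cancel]
    push_cast
    field_simp
    ring
  unfold S4LSE
  simp only [key]
  rw [← Finset.mul_sum]
  congr 1
  induction N with
  | zero =>
    simp [Finset.sum_range_succ, show 2 * (0 + 1) = 2 from rfl, q_zero ha, show qLSE a 0 x = laguerreP a 0 x from q_zero ha x]
    rw [show a + 1 + 1 = a + 2 by ring]
    ring
  | succ N ih =>
    rw [Finset.sum_range_succ, ih, show 2 * (N + 1 + 1) = 2 * (N + 1) + 1 + 1 by ring,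
      Finset.sum_range_succ _ (2 * (N + 1) + 1), Finset.sum_range_succ _ (2 * (N + 1))]
    have hm : (0 : ℝ) ≤ N := Nat.cast_nonneg N
    have g : Real.Gamma (a + 2 * ((N + 1 : ℕ) : ℝ) + 1) =
        (a + 2 * N + 2) * Real.Gamma (a + 2 * (N : ℝ) + 2) := by
      rw [← Real.Gamma_add_one (by linarith)]
      congr 1; push_cast; ring
    have gp : Real.Gamma (a + 2 * (N : ℝ) + 2) ≠ 0 := (Real.Gamma_pos_of_pos (by linarith)).ne'
    have h0 : a + 2 * (N : ℝ) + 2 ≠ 0 := by linarith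
    have hfp : ((2 * N + 1).factorial : ℝ) ≠ 0 := by positivity
    have hf : ((2 * (N + 1)).factorial : ℝ) = (2 * N + 2) * (2 * N + 1).factorial := by
      rw [show 2 * (N + 1) = 2 * N + 1 + 1 by ring, Nat.factorial_succ]; push_cast; ring
    have c1 : a + ((2 * (N + 1) : ℕ) : ℝ) + 1 = a + 2 * ((N + 1 : ℕ) : ℝ) + 1 := by
      push_cast; ring
    have c2 : a + ((2 * (N + 1) + 1 : ℕ) : ℝ) + 1 = a + 2 * ((N + 1 : ℕ) : ℝ) + 2 := by
      push_cast; ring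
    have hq : qLSE a (2 * (N + 1)) x * laguerreP a (2 * (N + 1)) y /
          ((Nat.factorial (2 * (N + 1))) * Real.Gamma (a + 2 * ((N + 1 : ℕ) : ℝ) + 1))
        = laguerreP a (2 * (N + 1)) x * laguerreP a (2 * (N + 1)) y /
          ((Nat.factorial (2 * (N + 1))) * Real.Gamma (a + 2 * ((N + 1 : ℕ) : ℝ) + 1))
         + qLSE a (2 * N) x * laguerreP a (2 * N + 2) y /
          ((Nat.factorial (2 * N + 1)) * Real.Gamma (a + 2 * (N : ℝ) + 2)) := by
      rw [q_succ ha, g, hf, show 2 * (N + 1) = 2 * N + 2 by ring]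
      have h1 : 2 * (N : ℝ) + 2 ≠ 0 := by linarith
      field_simp
      ring
    rw [c1, c2, hq]
    ring

/-- Closed-form summation of the Laguerre symplectic ensemble kernel `S̃₄(x,y)`. -/
theorem lse_kernel_summation (a : ℝ) (ha : -1 < a) (N : ℕ) (hN : 1 ≤ N)
    (x y : ℝ) (hx : 0 < x) (hy : 0 < y) :
    S4LSE a N x y
      = (1 / 2) * x ^ ((a + 1) / 2) * y ^ ((a - 1) / 2) * Real.exp (-(x + y) / 2) *
          ∑ l ∈ range (2 * N),
            laguerreP a l x * laguerreP a l y /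
              ((Nat.factorial l) * Real.Gamma (a + (l : ℝ) + 1))
        - (1 / (4 * (Nat.factorial (2 * N - 1)) * Real.Gamma (a + 2 * (N : ℝ)))) *
            (y ^ ((a - 1) / 2) * Real.exp (-y / 2)) * laguerreP a (2 * N) y *
            ∫ t in Set.Ioi x, t ^ ((a - 1) / 2) * Real.exp (-t / 2) * laguerreP a (2 * N - 1) t := by
  obtain ⟨M, rfl⟩ : ∃ M, N = M + 1 := ⟨N - 1, by omega⟩
  rw [S4_sum ha M hy]
  have e1 : 2 * (M + 1) - 1 = 2 * M + 1 := by omega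
  rw [e1, q_integral ha M hx]
  have e2 : a + 2 * ((M + 1 : ℕ) : ℝ) = a + 2 * (M : ℝ) + 2 := by push_cast; ring
  have e3 : Real.exp (-(x + y) / 2) = Real.exp (-x / 2) * Real.exp (-y / 2) := by
    rw [← Real.exp_add]; congr 1; ring
  rw [e2, e3]
  have e4 : laguerreP a (2 * (M + 1)) y = laguerreP a (2 * M + 2) y := rfl
  rw [e4]
  have hm : (0 : ℝ) ≤ M := Nat.cast_nonneg M
  have gp : Real.Gamma (a + 2 * (M : ℝ) + 2) ≠ 0 := (Real.Gamma_pos_of_pos (by linarith)).ne'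
  have hfp : ((2 * M + 1).factorial : ℝ) ≠ 0 := by positivity
  generalize ∑ l ∈ range (2 * (M + 1)), laguerreP a l x * laguerreP a l y /
              ((Nat.factorial l) * Real.Gamma (a + (l : ℝ) + 1)) = S
  field_simp
  ring
end
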